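/- arXiv:1210.3488 — 4 statements merged into one kernel-verified Lean document; each statement's English description precedes it below -/
import Mathlib

section
/- Let n ≥ 2 and let R be a 2-torsionfree commutative domain. Then for every R-bilinear map q : T_n(R) × T_n(R) → T_n(R) on the algebra T_n(R) of n×n upper triangular matrices over R, every commuting trace T_q : T_n(R) → T_n(R) of q is proper. -/
open Matrix

set_option synthInstance.maxHeartbeats 1000000
set_option maxHeartbeats 1000000

/-- The algebra `T_n(R)` of `n × n` upper triangular matrices over `R`,
realized as a subalgebra of the full matrix algebra. -/
def upperTriangularAlgebra (n : ℕ) (R : Type*) [CommRing R] :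
    Subalgebra R (Matrix (Fin n) (Fin n) R) where
  carrier := {x | x.BlockTriangular (id : Fin n → Fin n)}
  add_mem' hx hy := hx.add hy
  mul_mem' hx hy := hx.mul hy
  algebraMap_mem' r := by
    intro i j hij
    rw [Matrix.algebraMap_matrix_apply]
    simp only [id] at hij
    rw [if_neg (by omega : ¬ i = j)]

namespace BE
open MvPolynomial

section poly
variable {σ : Type*} [DecidableEq σ] {R : Type*} [CommRing R]

lemma dvd_sub_subst (a : σ) (p f : MvPolynomial σ R) :
    (X a - p) ∣ f - aeval (Function.update X a p) f := by
  induction f using MvPolynomial.induction_on with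
  | C r => simp
  | add f g hf hg =>
    rw [map_add, show f + g - (aeval (Function.update X a p) f + aeval (Function.update X a p) g)
      = (f - aeval (Function.update X a p) f) + (g - aeval (Function.update X a p) g) by ring]
    exact dvd_add hf hg
  | mul_X f i hf =>
    rw [map_mul, aeval_X]
    by_cases h : i = a
    · subst h
      rw [Function.update_self, show f * X i - aeval (Function.update X i p) f * p =
        (f - aeval (Function.update X i p) f) * p + f * (X i - p) by ring]
      exact dvd_add (Dvd.dvd.mul_right hf _) (Dvd.intro_left _ rfl)
    · rw [Function.update_of_ne h, ← sub_mul]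
      exact Dvd.dvd.mul_right hf _

lemma dvd_of_subst [IsDomain R] (a : σ) (p m G F : MvPolynomial σ R)
    (h : (X a - p) * F = m * G) (hp : aeval (Function.update X a p) p = p)
    (hG : aeval (Function.update X a p) G ≠ 0) : (X a - p) ∣ m := by
  have := congrArg (aeval (Function.update X a p)) h
  rw [map_mul, map_mul, map_sub, hp, aeval_X, Function.update_self, sub_self, zero_mul] at this
  have h0 : aeval (Function.update X a p) m = 0 := by
    rcases mul_eq_zero.1 this.symm with h | h
    · exact h
    · exact absurd h hG
  have := dvd_sub_subst a p m
  rwa [h0, sub_zero] at this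

lemma totalDegree_factor [IsDomain R] (u m : MvPolynomial σ R) (d : ℕ) (hu : 1 ≤ u.totalDegree)
    (h : (u * m).totalDegree ≤ d + 1) : m.totalDegree ≤ d := by
  by_cases hm : m = 0
  · simp [hm]
  have hu0 : u ≠ 0 := by rintro rfl; simp at hu
  rw [totalDegree_mul_of_isDomain hu0 hm] at h
  omega

lemma totalDegree_X_sub_X [IsDomain R] (a b : σ) (h : a ≠ b) :
    1 ≤ (X a - X b : MvPolynomial σ R).totalDegree := by
  by_contra hc
  have h0 : (X a - X b : MvPolynomial σ R).totalDegree = 0 := by omega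
  have h1 := totalDegree_eq_zero_iff_eq_C.1 h0
  have h2 := congrArg (eval (fun _ => (0:R))) h1
  have h3 := congrArg (eval (Pi.single a (1:R))) h1
  simp [h.symm] at h2 h3

lemma X_sub_X_ne [IsDomain R] (a b : σ) (h : a ≠ b) :
    (X a - X b : MvPolynomial σ R) ≠ 0 := by
  have := totalDegree_X_sub_X (R := R) a b h
  intro h0
  simp [h0] at this

lemma exists_linear [Fintype σ] (m : MvPolynomial σ R) (h : m.totalDegree ≤ 1) :
    ∃ (c : R) (l : (σ → R) →ₗ[R] R), ∀ x, eval x m = c + l x := by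
  have h1 := sum_homogeneousComponent m
  have key : ∃ (l : (σ → R) →ₗ[R] R), ∀ x, eval x (homogeneousComponent 1 m) = l x := by
    have : homogeneousComponent 1 m ∈ homogeneousSubmodule σ R 1 := homogeneousComponent_mem 1 m
    rw [homogeneousSubmodule_one_eq_span_X] at this
    generalize homogeneousComponent 1 m = w at this ⊢
    induction this using Submodule.span_induction with
    | mem p hp => 
      obtain ⟨i, rfl⟩ := hp
      exact ⟨LinearMap.proj i, by simp⟩
    | zero => exact ⟨0, by simp⟩
    | add p q _ _ hp hq =>
      obtain ⟨l, hl⟩ := hp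
      obtain ⟨l', hl'⟩ := hq
      exact ⟨l + l', by simp [hl, hl']⟩
    | smul r p _ hp =>
      obtain ⟨l, hl⟩ := hp
      exact ⟨r • l, by simp [hl]⟩
  obtain ⟨l, hl⟩ := key
  refine ⟨coeff 0 m, l, fun x => ?_⟩
  rw [← hl]
  have : m = C (coeff 0 m) + homogeneousComponent 1 m := by
    rcases Nat.le_one_iff_eq_zero_or_eq_one.1 h with h' | h'
    · rw [h'] at h1
      rw [homogeneousComponent_eq_zero 1 m (by omega), add_zero]
      simpa using h1.symm
    · rw [h'] at h1
      simpa [Finset.sum_range_succ] using h1.symm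
  conv_lhs => rw [this]
  simp

end poly

section mat
variable (n : ℕ) (R : Type*) [CommRing R]

/-- Generic upper triangular matrix. -/
noncomputable def gM : Matrix (Fin n) (Fin n) (MvPolynomial (Fin n × Fin n) R) :=
  Matrix.of fun i j => if i ≤ j then X (i, j) else 0

variable {n R}

lemma gM_le {i j : Fin n} (h : i ≤ j) : gM n R i j = X (i, j) := by simp [gM, h]
lemma gM_lt {i j : Fin n} (h : j < i) : gM n R i j = 0 := by simp [gM, not_le.2 h]

/-- Commuting upper triangular matrices with entries of degree at most two. -/
structure Good (D : Matrix (Fin n) (Fin n) (MvPolynomial (Fin n × Fin n) R)) : Prop where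
  comm : D * gM n R = gM n R * D
  tri : ∀ i j, j < i → D i j = 0
  deg : ∀ i j, (D i j).totalDegree ≤ 2

variable {D : Matrix (Fin n) (Fin n) (MvPolynomial (Fin n × Fin n) R)}

lemma Good.row (hD : Good D) {j : Fin n} (hz : ∀ i k, k < j → D i k = 0) (i : Fin n) :
    D i j * X (j, j) = ∑ k, gM n R i k * D k j := by
  have h := congrFun (congrFun hD.comm i) j
  rw [Matrix.mul_apply, Matrix.mul_apply] at h
  rw [← h, Finset.sum_eq_single j, gM_le le_rfl]
  · intro k _ hk
    rcases lt_or_gt_of_ne hk with h | h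
    · rw [hz i k h, zero_mul]
    · rw [gM_lt h, mul_zero]
  · simp

lemma Good.sum_sub (hD : Good D) {j : Fin n} (i : Fin n) (s : Finset (Fin n))
    (hs : ∀ k, i ≤ k → k ≤ j → k ∈ s) :
    ∑ k, gM n R i k * D k j = ∑ k ∈ s, gM n R i k * D k j := by
  symm
  apply Finset.sum_subset (Finset.subset_univ _)
  intro k _ hk
  by_cases h1 : i ≤ k
  · by_cases h2 : k ≤ j
    · exact absurd (hs k h1 h2) hk
    · rw [hD.tri k j (not_le.1 h2), mul_zero]
  · rw [gM_lt (not_le.1 h1), zero_mul]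

/-- rows just above the diagonal -/
lemma Good.stepA [IsDomain R] (hD : Good D) {a b : Fin n} (hab : a.val + 1 = b.val)
    (hz : ∀ i k, k < b → D i k = 0) :
    ∃ m : MvPolynomial (Fin n × Fin n) R, m.totalDegree ≤ 1 ∧ D a b = X (a, b) * m ∧
      D b b = (X (b, b) - X (a, a)) * m := by
  have hne : a ≠ b := by rintro rfl; omega
  have hlt : a < b := Fin.lt_def.2 (by omega)
  have h := hD.row hz a
  rw [hD.sum_sub a {a, b} (by intro k h1 h2; simp only [Finset.mem_insert, Finset.mem_singleton, Fin.ext_iff]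
                              rw [Fin.le_def] at h1 h2; omega),
    Finset.sum_pair hne, gM_le le_rfl, gM_le hlt.le] at h
  have h' : (X (a, b) - 0) * D b b = D a b * (X (b, b) - X (a, a)) := by linear_combination -h
  have hd := dvd_of_subst _ _ _ _ _ h' (by simp) (by
    rw [map_sub, aeval_X, aeval_X, Function.update_of_ne, Function.update_of_ne]
    · exact X_sub_X_ne _ _ (by simp [hne.symm])
    · simp [hne]
    · simp [hne.symm])
  rw [sub_zero] at hd h'
  obtain ⟨m, hm⟩ := hd
  refine ⟨m, ?_, hm, ?_⟩
  · apply totalDegree_factor (X (a, b)) m 1 (by simp)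
    rw [← hm]; exact hD.deg _ _
  · apply mul_left_cancel₀ (X_ne_zero (R := R) (a, b))
    rw [h', hm]; ring

lemma Good.stepB [IsDomain R] (hD : Good D) {c a b : Fin n} (hca : c.val + 1 = a.val)
    (hab : a.val + 1 = b.val)
    (hz : ∀ i k, k < b → D i k = 0) :
    ∃ r : R, D a b = C r * (X (a, b) * (X (b, b) - X (c, c))) ∧
      D b b = C r * ((X (b, b) - X (a, a)) * (X (b, b) - X (c, c))) ∧
      D c b = C r * (X (c, a) * X (a, b) + X (c, b) * (X (b, b) - X (a, a))) := by
  obtain ⟨m, hm, h1, h2⟩ := hD.stepA hab hz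
  have n1 : a ≠ b := by rintro rfl; omega
  have n2 : c ≠ a := by rintro rfl; omega
  have n3 : c ≠ b := by rintro rfl; omega
  have hlt : a < b := Fin.lt_def.2 (by omega)
  have hlt2 : c < a := Fin.lt_def.2 (by omega)
  have h := hD.row hz c
  rw [hD.sum_sub c {c, a, b} (by
        intro k h1 h2
        simp only [Finset.mem_insert, Finset.mem_singleton, Fin.ext_iff]
        rw [Fin.le_def] at h1 h2; omega),
    Finset.sum_insert (by simp [n2, n3]), Finset.sum_pair n1, gM_le le_rfl, gM_le hlt2.le,
    gM_le (hlt2.trans hlt).le, h1, h2] at h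
  have h' : (X (b, b) - X (c, c)) * D c b =
      m * (X (c, a) * X (a, b) + X (c, b) * (X (b, b) - X (a, a))) := by linear_combination h
  obtain ⟨r, hr⟩ := dvd_of_subst _ _ _ _ _ h' (by simp [n3]) (by
    intro h0
    have := congrArg (eval (fun p => if p = (c, a) ∨ p = (a, b) then (1 : R) else 0)) h0
    simp [Function.update_apply, n1, n2, n3, n1.symm, n2.symm, n3.symm] at this)
  have hr0 : r.totalDegree ≤ 0 := by
    apply totalDegree_factor (X (b, b) - X (c, c)) r 0
    · exact totalDegree_X_sub_X _ _ (by simp [n3.symm])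
    · rw [← hr]; exact hm
  have hrc := totalDegree_eq_zero_iff_eq_C.1 (Nat.le_zero.1 hr0)
  refine ⟨coeff 0 r, ?_, ?_, ?_⟩
  · rw [← hrc, h1, hr]; ring
  · rw [← hrc, h2, hr]; ring
  · rw [← hrc]
    apply mul_left_cancel₀ (X_sub_X_ne (R := R) (b, b) (c, c) (by simp [n3.symm]))
    rw [h', hr]; ring

lemma Good.stepC [IsDomain R] (hD : Good D) {e c a b : Fin n} (hec : e.val + 1 = c.val)
    (hca : c.val + 1 = a.val) (hab : a.val + 1 = b.val)
    (hz : ∀ i k, k < b → D i k = 0) : ∀ i, D i b = 0 := by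
  obtain ⟨r, h1, h2, h3⟩ := hD.stepB hca hab hz
  have n1 : a ≠ b := by rintro rfl; omega
  have n2 : c ≠ a := by rintro rfl; omega
  have n3 : c ≠ b := by rintro rfl; omega
  have n4 : e ≠ c := by rintro rfl; omega
  have n5 : e ≠ a := by rintro rfl; omega
  have n6 : e ≠ b := by rintro rfl; omega
  have hlt : a < b := Fin.lt_def.2 (by omega)
  have hlt2 : c < a := Fin.lt_def.2 (by omega)
  have hlt3 : e < c := Fin.lt_def.2 (by omega)
  have h := hD.row hz e
  rw [hD.sum_sub e {e, c, a, b} (by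
        intro k h1 h2
        simp only [Finset.mem_insert, Finset.mem_singleton, Fin.ext_iff]
        rw [Fin.le_def] at h1 h2; omega),
    Finset.sum_insert (by simp [n4, n5, n6]), Finset.sum_insert (by simp [n2, n3]),
    Finset.sum_pair n1, gM_le le_rfl, gM_le hlt3.le, gM_le (hlt3.trans hlt2).le,
    gM_le (hlt3.trans (hlt2.trans hlt)).le, h1, h2, h3] at h
  have hr : r = 0 := by
    have := congrArg (eval (fun p => if p = (e, c) ∨ p = (c, a) ∨ p = (a, b) then (1 : R) else 0)) h
    simpa [n1, n2, n3, n4, n5, n6, n1.symm, n2.symm, n3.symm, n4.symm, n5.symm, n6.symm] using this.symm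
  subst hr
  have hb : D b b = 0 := by simpa using h2
  have key : ∀ d : ℕ, ∀ i : Fin n, i.val + d = b.val → D i b = 0 := by
    intro d
    induction d using Nat.strong_induction_on with
    | _ d ih =>
      intro i hi
      by_cases hd : d = 0
      · have : i = b := Fin.ext (by omega)
        rw [this, hb]
      have hne : b ≠ i := by rintro rfl; omega
      have h := hD.row hz i
      rw [Finset.sum_eq_single i, gM_le le_rfl] at h
      · apply mul_left_cancel₀ (X_sub_X_ne (R := R) (b, b) (i, i) (by simp [hne]))
        linear_combination h
      · intro k _ hk
        rcases lt_or_gt_of_ne hk with h | h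
        · rw [gM_lt h, zero_mul]
        · by_cases hkb : k ≤ b
          · rw [Fin.lt_def] at h
            rw [Fin.le_def] at hkb
            rw [ih (b.val - k.val) (by omega) k (by omega), mul_zero]
          · rw [hD.tri k b (not_le.1 hkb), mul_zero]
      · simp
  intro i
  by_cases hi : i ≤ b
  · rw [Fin.le_def] at hi
    exact key (b.val - i.val) i (by omega)
  · exact hD.tri _ _ (not_le.1 hi)

lemma Good.eq_zero [IsDomain R] (hD : Good D)
    (hz : ∀ i k : Fin n, k.val < 3 → D i k = 0) : D = 0 := by
  have key : ∀ d : ℕ, ∀ k : Fin n, k.val = d → ∀ i, D i k = 0 := by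
    intro d
    induction d using Nat.strong_induction_on with
    | _ d ih =>
      intro k hk i
      by_cases h3 : k.val < 3
      · exact hz i k h3
      · have := k.2
        exact hD.stepC (e := ⟨k.val - 3, by omega⟩) (c := ⟨k.val - 2, by omega⟩)
          (a := ⟨k.val - 1, by omega⟩) (b := k) (by simp; omega) (by simp; omega)
          (by simp; omega) (fun i' k' hk' => ih k'.val (by rw [Fin.lt_def] at hk'; omega) k' rfl i') i
  ext1 i j
  exact key j.val j rfl i

lemma gM_deg (i j : Fin n) [Nontrivial R] : (gM n R i j).totalDegree ≤ 1 := by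
  unfold gM
  simp only [Matrix.of_apply]
  split_ifs <;> simp

lemma Good.sub_smul_one (hD : Good D) (f : MvPolynomial (Fin n × Fin n) R)
    (hf : f.totalDegree ≤ 2) : Good (D - f • 1) where
  comm := by rw [sub_mul, mul_sub, hD.comm]; simp
  tri i j h := by simp [hD.tri i j h, Matrix.one_apply, h.ne']
  deg i j := by
    refine (totalDegree_sub _ _).trans (max_le (hD.deg i j) ?_)
    by_cases h : i = j <;> simp [Matrix.one_apply, h, hf]

lemma gM_good_deg [IsDomain R] (m : MvPolynomial (Fin n × Fin n) R) (hm : m.totalDegree ≤ 1)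
    (hD : Good D) : Good (D - m • gM n R) where
  comm := by rw [sub_mul, mul_sub, hD.comm]; simp
  tri i j h := by simp [hD.tri i j h, gM_lt h]
  deg i j := by
    refine (totalDegree_sub _ _).trans (max_le (hD.deg i j) ?_)
    refine (totalDegree_mul _ _).trans ?_
    have := gM_deg (R := R) i j
    omega

lemma gM_tri_sq {i j : Fin n} (h : j < i) : (gM n R * gM n R) i j = 0 := by
  rw [Matrix.mul_apply]
  apply Finset.sum_eq_zero
  intro k _
  by_cases hk : k < i
  · rw [gM_lt hk, zero_mul]
  · rw [gM_lt (h.trans_le (not_lt.1 hk)), mul_zero]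

lemma gM_sq_good [IsDomain R] (r : R)
    (hD : Good D) : Good (D - (C r : MvPolynomial (Fin n × Fin n) R) • (gM n R * gM n R)) where
  comm := by rw [sub_mul, mul_sub, hD.comm]; simp [mul_assoc]
  tri i j h := by simp [hD.tri i j h, gM_tri_sq h]
  deg i j := by
    refine (totalDegree_sub _ _).trans (max_le (hD.deg i j) ?_)
    rw [Matrix.smul_apply, smul_eq_mul]
    refine (totalDegree_mul _ _).trans ?_
    rw [totalDegree_C, zero_add, Matrix.mul_apply]
    refine (totalDegree_finsetSum _ _).trans (Finset.sup_le fun k _ => ?_)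
    refine (totalDegree_mul _ _).trans ?_
    have := gM_deg (R := R) i k
    have := gM_deg (R := R) k j
    omega

theorem Good.main [IsDomain R] (hn : 2 ≤ n) (hD : Good D) :
    ∃ (r : R) (m f : MvPolynomial (Fin n × Fin n) R), m.totalDegree ≤ 1 ∧
      D = (C r : MvPolynomial (Fin n × Fin n) R) • (gM n R * gM n R) + m • gM n R + f • 1 := by
  let i0 : Fin n := ⟨0, by omega⟩
  let i1 : Fin n := ⟨1, by omega⟩
  have n01 : i0 ≠ i1 := by simp [i0, i1]
  have hle01 : i0 ≤ i1 := by simp [i0, i1, Fin.le_def]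
  have g0 := hD.sub_smul_one (D i0 i0) (hD.deg _ _)
  have c0 : ∀ i k : Fin n, k < i1 → (D - D i0 i0 • 1) i k = 0 := by
    intro i k hk
    have : k = i0 := by ext; rw [Fin.lt_def] at hk; simp [i0, i1] at *; omega
    subst this
    by_cases hi : i = i0
    · simp [hi]
    · exact g0.tri _ _ (lt_of_le_of_ne (by simp [i0, Fin.le_def]) (Ne.symm hi))
  obtain ⟨m, hm, h01, h11⟩ := g0.stepA (a := i0) (b := i1) rfl c0
  have g1 := (gM_good_deg m hm g0).sub_smul_one (-(m * X (i0, i0))) (by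
    rw [totalDegree_neg]
    refine (totalDegree_mul _ _).trans ?_
    rw [totalDegree_X]; omega)
  set D1 := D - D i0 i0 • 1 - m • gM n R - (-(m * X (i0, i0))) • 1 with hD1
  have c1 : ∀ i k : Fin n, k.val < 2 → D1 i k = 0 := by
    intro i k hk
    by_cases hik : k < i
    · exact g1.tri _ _ hik
    have hk' : k = i0 ∨ k = i1 := by
      simp only [i0, i1, Fin.ext_iff]; omega
    have hik := not_lt.1 hik
    rcases hk' with rfl | rfl
    · have : i = i0 := by ext; rw [Fin.le_def] at hik; simp [i0] at *; omega
      subst this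
      rw [hD1, Matrix.sub_apply, Matrix.sub_apply, c0 i0 i0 (lt_of_le_of_ne hle01 n01)]
      simp [gM_le]
    · have : i = i0 ∨ i = i1 := by
        rw [Fin.le_def] at hik; simp only [i0, i1, Fin.ext_iff] at *; omega
      rcases this with rfl | rfl
      · rw [hD1, Matrix.sub_apply, Matrix.sub_apply, h01]
        simp [gM_le hle01, n01]; ring
      · rw [hD1, Matrix.sub_apply, Matrix.sub_apply, h11]
        simp [gM_le]; ring
  by_cases h3 : n = 2
  · refine ⟨0, m, D i0 i0 - m * X (i0, i0), hm, ?_⟩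
    have : D1 = 0 := by
      ext1 i j
      exact c1 i j (by omega)
    have e : D = D1 + (m • gM n R + (D i0 i0 - m * X (i0, i0)) • 1) := by
      rw [hD1]; module
    rw [this, zero_add] at e
    rw [map_zero, zero_smul, zero_add]
    exact e
  let i2 : Fin n := ⟨2, by omega⟩
  obtain ⟨r, e12, e22, e02⟩ := g1.stepB (c := i0) (a := i1) (b := i2) rfl rfl
    (fun i k hk => c1 i k (by rw [Fin.lt_def] at hk; exact hk))
  have n02 : i0 ≠ i2 := by simp [i0, i2]
  have n12 : i1 ≠ i2 := by simp [i1, i2]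
  have hle02 : i0 ≤ i2 := by simp [i0, i2, Fin.le_def]
  have hle12 : i1 ≤ i2 := by simp [i1, i2, Fin.le_def]
  have g2 := (gM_good_deg (-(C r * (X (i0, i0) + X (i1, i1)))) (by
    rw [totalDegree_neg]
    refine (totalDegree_mul _ _).trans ?_
    rw [totalDegree_C, zero_add]
    exact (totalDegree_add _ _).trans (by simp)) (gM_sq_good r g1)).sub_smul_one
      (C r * (X (i0, i0) * X (i1, i1))) (by
    refine (totalDegree_mul _ _).trans ?_
    rw [totalDegree_C, zero_add]
    exact (totalDegree_mul _ _).trans (by simp))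
  set D2 := D1 - (C r : MvPolynomial (Fin n × Fin n) R) • (gM n R * gM n R) - (-(C r * (X (i0, i0) + X (i1, i1)))) • gM n R
    - (C r * (X (i0, i0) * X (i1, i1))) • 1 with hD2
  have sq : ∀ i j : Fin n, j.val < 3 → (gM n R * gM n R) i j =
      gM n R i i0 * gM n R i0 j + gM n R i i1 * gM n R i1 j + gM n R i i2 * gM n R i2 j := by
    intro i j hj
    rw [Matrix.mul_apply, ← Finset.sum_subset (Finset.subset_univ {i0, i1, i2}),
      Finset.sum_insert (by simp [n01, n02]), Finset.sum_pair n12, add_assoc]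
    intro k _ hk
    rw [gM_lt (i := k), mul_zero]
    simp only [Finset.mem_insert, Finset.mem_singleton, i0, i1, i2, Fin.ext_iff] at hk
    rw [Fin.lt_def]
    omega
  have l10 : gM n R i1 i0 = 0 := gM_lt (lt_of_le_of_ne hle01 n01)
  have l20 : gM n R i2 i0 = 0 := gM_lt (lt_of_le_of_ne hle02 n02)
  have l21 : gM n R i2 i1 = 0 := gM_lt (lt_of_le_of_ne hle12 n12)
  have hz : D2 = 0 := by
    apply g2.eq_zero
    intro i k hk
    by_cases hik : k < i
    · exact g2.tri _ _ hik
    have hik := not_lt.1 hik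
    have hk' : k = i0 ∨ k = i1 ∨ k = i2 := by
      simp only [i0, i1, i2, Fin.ext_iff]; omega
    have hi' : i = i0 ∨ i = i1 ∨ i = i2 := by
      rw [Fin.le_def] at hik
      simp only [i0, i1, i2, Fin.ext_iff]; omega
    have E : D2 i k = D1 i k - C r * (gM n R * gM n R) i k
      + (C r * (X (i0, i0) + X (i1, i1))) * gM n R i k
      - (C r * (X (i0, i0) * X (i1, i1))) * (1 : Matrix (Fin n) (Fin n) _) i k := by
      rw [hD2]; simp
    rw [E, sq i k hk]
    have u01 := c1 i0 i1 (by simp [i1])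
    have u00 := c1 i0 i0 (by simp [i0])
    have u11 := c1 i1 i1 (by simp [i1])
    have u10 := c1 i1 i0 (by simp [i0])
    have u20 := c1 i2 i0 (by simp [i0])
    have u21 := c1 i2 i1 (by simp [i1])
    rcases hk' with rfl | rfl | rfl <;> rcases hi' with rfl | rfl | rfl <;>
      simp only [u01, u00, u11, u10, u20, u21, e12, e22, e02, l10, l20, l21, gM_le hle01,
        gM_le hle02, gM_le hle12, gM_le le_rfl, Matrix.one_apply, n01, n02, n12, n01.symm,
        n02.symm, n12.symm, if_true, if_false] <;> ring
  refine ⟨r, m - C r * (X (i0, i0) + X (i1, i1)),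
    D i0 i0 - m * X (i0, i0) + C r * (X (i0, i0) * X (i1, i1)), ?_, ?_⟩
  · refine (totalDegree_sub _ _).trans (max_le hm ?_)
    refine (totalDegree_mul _ _).trans ?_
    rw [totalDegree_C, zero_add]
    exact (totalDegree_add _ _).trans (by simp)
  · have e : D = D2 + ((C r : MvPolynomial (Fin n × Fin n) R) • (gM n R * gM n R) + (m - C r * (X (i0, i0) + X (i1, i1))) • gM n R +
        (D i0 i0 - m * X (i0, i0) + C r * (X (i0, i0) * X (i1, i1))) • 1) := by
      rw [hD2, hD1]; module
    rw [hz, zero_add] at e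
    exact e

end mat

section lin

lemma quad_sum {ι S N : Type*} [CommRing S] [AddCommGroup N] [Module S N] [DecidableEq ι]
    (g : ι → ι → N) (h1 : ∀ a, g a a = 0) (h2 : ∀ a b, g a b + g b a = 0) (s : ι → S)
    (A : Finset ι) : ∑ a ∈ A, ∑ b ∈ A, (s a * s b) • g a b = 0 := by
  induction A using Finset.induction_on with
  | empty => simp
  | insert i A hi ih =>
    simp only [Finset.sum_insert hi, Finset.sum_add_distrib, ih, h1, smul_zero, zero_add, add_zero]
    rw [← Finset.sum_add_distrib]
    apply Finset.sum_eq_zero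
    intro b _
    rw [mul_comm (s b), ← smul_add, h2, smul_zero]

lemma cubic_sum {ι S N : Type*} [CommRing S] [AddCommGroup N] [Module S N] [DecidableEq ι]
    (t : ι → ι → ι → N) (h1 : ∀ a, t a a a = 0)
    (h2 : ∀ a b, t a a b + t a b a + t b a a = 0)
    (h3 : ∀ a b c, (t a b c + t b a c + t b c a) + (t a c b + t c a b + t c b a) = 0) (s : ι → S)
    (A : Finset ι) : ∑ a ∈ A, ∑ b ∈ A, ∑ c ∈ A, (s a * s b * s c) • t a b c = 0 := by
  induction A using Finset.induction_on with
  | empty => simp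
  | insert i A hi ih =>
    have q := quad_sum (fun b c => t i b c + t b i c + t b c i)
      (fun a => by rw [← h2 a i]; abel) (h3 i) s A
    have l : ∑ b ∈ A, s b • (t i i b + t i b i + t b i i) = 0 :=
      Finset.sum_eq_zero fun b _ => by rw [h2, smul_zero]
    have e : ∑ a ∈ insert i A, ∑ b ∈ insert i A, ∑ c ∈ insert i A, (s a * s b * s c) • t a b c =
      (s i * s i * s i) • t i i i + (s i * s i) • ∑ b ∈ A, s b • (t i i b + t i b i + t b i i)
      + s i • ∑ b ∈ A, ∑ c ∈ A, (s b * s c) • (t i b c + t b i c + t b c i)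
      + ∑ a ∈ A, ∑ b ∈ A, ∑ c ∈ A, (s a * s b * s c) • t a b c := by
      simp only [Finset.sum_insert hi, Finset.sum_add_distrib, Finset.smul_sum, smul_add, smul_smul,
        mul_assoc, mul_comm _ (s i), mul_left_comm _ (s i)]
      abel
    rw [e, h1, l, q, ih]
    simp

lemma six {V : Type*} [AddCommGroup V] (htf : ∀ v : V, v + v = 0 → v = 0)
    (t : V → V → V → V)
    (l1 : ∀ x x' y z, t (x + x') y z = t x y z + t x' y z)
    (l2 : ∀ x y y' z, t x (y + y') z = t x y z + t x y' z)
    (l3 : ∀ x y z z', t x y (z + z') = t x y z + t x y z')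
    (h : ∀ x, t x x x = 0) :
    (∀ a b, t a a b + t a b a + t b a a = 0) ∧
    (∀ a b c, (t a b c + t b a c + t b c a) + (t a c b + t c a b + t c b a) = 0) := by
  have k1 : ∀ x y z, t (-x) y z = - t x y z := fun x y z =>
    map_neg (AddMonoidHom.mk' (fun x => t x y z) (fun x x' => l1 x x' y z)) x
  have k2 : ∀ x y z, t x (-y) z = - t x y z := fun x y z =>
    map_neg (AddMonoidHom.mk' (fun y => t x y z) (fun y y' => l2 x y y' z)) y
  have k3 : ∀ x y z, t x y (-z) = - t x y z := fun x y z =>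
    map_neg (AddMonoidHom.mk' (fun z => t x y z) (fun z z' => l3 x y z z')) z
  have A : ∀ a b, t a a b + t a b a + t b a a = 0 := by
    intro a b
    apply htf
    have e1 := h (a + b)
    have e2 := h (a + -b)
    have e3 := h b
    have e4 := h a
    simp only [l1, l2, l3, k1, k2, k3] at e1 e2
    linear_combination (norm := module) (1:ℤ) • e1 - (1:ℤ) • e2 - (2:ℤ) • e3
  refine ⟨A, fun a b c => ?_⟩
  have e := A (b + c) a
  have eb := A b a
  have ec := A c a
  simp only [l1, l2, l3] at e
  have := congrArg₂ (· - ·) e (congrArg₂ (· + ·) eb ec)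
  simp only [add_zero, sub_zero] at this
  rw [← this]; abel

end lin

section fin
variable {n : ℕ} {R : Type*} [CommRing R]

lemma ut_lt (x : upperTriangularAlgebra n R) {i j : Fin n} (h : j < i) : x.1 i j = 0 := x.2 h

/-- Standard basis (zero below the diagonal). -/
def E (a : Fin n × Fin n) : upperTriangularAlgebra n R :=
  ⟨Matrix.of fun i j => if i ≤ j ∧ i = a.1 ∧ j = a.2 then 1 else 0, by
    intro i j h
    have : ¬ i ≤ j := not_le.2 h
    simp [this]⟩

lemma E_apply (a : Fin n × Fin n) (i j : Fin n) :
    (E a : upperTriangularAlgebra n R).1 i j = if i ≤ j ∧ i = a.1 ∧ j = a.2 then 1 else 0 := rfl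

lemma sum_E {S : Type*} [CommRing S] (f : R →+* S) (s : Fin n × Fin n → S) (i j : Fin n) :
    ∑ a, s a * f ((E a : upperTriangularAlgebra n R).1 i j) = if i ≤ j then s (i, j) else 0 := by
  rw [Finset.sum_eq_single (i, j)]
  · by_cases h : i ≤ j <;> simp [E_apply, h]
  · intro a _ ha
    have : ¬ (i = a.1 ∧ j = a.2) := by
      rintro ⟨h1, h2⟩
      exact ha (Prod.ext h1.symm h2.symm)
    simp [E_apply, this]
  · simp

lemma eq_sum_E (x : upperTriangularAlgebra n R) : x = ∑ a, x.1 a.1 a.2 • E a := by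
  apply Subtype.ext
  ext i j
  have := sum_E (RingHom.id R) (fun a => x.1 a.1 a.2) i j
  rw [AddSubmonoidClass.coe_finsetSum, Matrix.sum_apply]
  simp only [RingHom.id_apply] at this
  refine Eq.trans ?_ this.symm
  split_ifs with h
  · rfl
  · exact ut_lt x (not_le.1 h)

variable (q : upperTriangularAlgebra n R →ₗ[R] upperTriangularAlgebra n R →ₗ[R]
          upperTriangularAlgebra n R)

/-- generic value of the trace -/
noncomputable def gQ : Matrix (Fin n) (Fin n) (MvPolynomial (Fin n × Fin n) R) :=
  Matrix.of fun i j => ∑ a, ∑ b, X a * X b * C ((q (E a) (E b)).1 i j)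

lemma gQ_eval (x : upperTriangularAlgebra n R) (i j : Fin n) :
    eval (fun a => x.1 a.1 a.2) (gQ q i j) = (q x x).1 i j := by
  conv_rhs => rw [eq_sum_E x]
  simp only [map_sum, LinearMap.sum_apply, map_smul, LinearMap.smul_apply, gQ, Matrix.of_apply,
    map_mul, eval_X, eval_C]
  rw [AddSubmonoidClass.coe_finsetSum, Matrix.sum_apply]
  rw [Finset.sum_comm]
  refine Finset.sum_congr rfl fun a _ => ?_
  rw [Finset.smul_sum, AddSubmonoidClass.coe_finsetSum, Matrix.sum_apply]
  refine Finset.sum_congr rfl fun b _ => ?_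
  change _ = x.1 a.1 a.2 * (x.1 b.1 b.2 * _)
  ring

lemma gM_eval (x : upperTriangularAlgebra n R) (i j : Fin n) :
    eval (fun a => x.1 a.1 a.2) (gM n R i j) = x.1 i j := by
  by_cases h : i ≤ j
  · simp [gM_le h]
  · rw [gM_lt (not_le.1 h), map_zero, ut_lt x (not_le.1 h)]

lemma gM_sum (i j : Fin n) : gM n R i j = ∑ c, X c * C ((E c : upperTriangularAlgebra n R).1 i j) := by
  rw [sum_E C X i j]; rfl

lemma gQ_good [IsDomain R] (htf : ∀ r : R, r + r = 0 → r = 0)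
    (hcomm : ∀ x : upperTriangularAlgebra n R, q x x * x = x * q x x) : Good (gQ q) where
  tri i j h := by simp [gQ, ut_lt _ h]
  deg i j := by
    simp only [gQ, Matrix.of_apply]
    refine (totalDegree_finsetSum _ _).trans (Finset.sup_le fun a _ => ?_)
    refine (totalDegree_finsetSum _ _).trans (Finset.sup_le fun b _ => ?_)
    refine (totalDegree_mul _ _).trans ?_
    rw [totalDegree_C, add_zero]
    refine (totalDegree_mul _ _).trans ?_
    simp
  comm := by
    obtain ⟨h2, h3⟩ := six (V := upperTriangularAlgebra n R)
      (fun v hv => by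
        apply Subtype.ext
        ext i j
        apply htf
        exact congrFun (congrFun (congrArg Subtype.val hv) i) j)
      (fun x y z => q x y * z - z * q x y)
      (by intros; simp only [map_add, LinearMap.add_apply, add_mul, mul_add]; abel)
      (by intros; simp only [map_add, LinearMap.add_apply, add_mul, mul_add]; abel)
      (by intros; simp only [map_add, LinearMap.add_apply, add_mul, mul_add]; abel)
      (fun x => sub_eq_zero.2 (hcomm x))
    ext1 i j
    let φ : upperTriangularAlgebra n R →+ MvPolynomial (Fin n × Fin n) R :=
      { toFun := fun v => C (v.1 i j)
        map_zero' := by simp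
        map_add' := fun x y => by
          change C (x.1 i j + y.1 i j) = _
          rw [C_add] }
    have key := cubic_sum (S := MvPolynomial (Fin n × Fin n) R)
      (fun a b c => φ (q (E a) (E b) * E c - E c * q (E a) (E b)))
      (fun a => by rw [hcomm, sub_self, map_zero])
      (fun a b => by rw [← map_add, ← map_add, h2 (E a) (E b), map_zero])
      (fun a b c => by simp only [← map_add]; rw [h3 (E a) (E b) (E c), map_zero])
      X Finset.univ
    rw [← sub_eq_zero, ← key]
    have hφ : ∀ a b c, φ (q (E a) (E b) * E c - E c * q (E a) (E b)) =
        ∑ k, (C ((q (E a) (E b)).1 i k) * C ((E c : upperTriangularAlgebra n R).1 k j)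
          - C ((E c : upperTriangularAlgebra n R).1 i k) * C ((q (E a) (E b)).1 k j)) := by
      intro a b c
      change C (((q (E a) (E b)).1 * (E c : upperTriangularAlgebra n R).1
        - (E c : upperTriangularAlgebra n R).1 * (q (E a) (E b)).1) i j) = _
      rw [Matrix.sub_apply, Matrix.mul_apply, Matrix.mul_apply, ← Finset.sum_sub_distrib, map_sum]
      simp only [map_sub, map_mul]
    simp only [hφ, smul_eq_mul, Finset.mul_sum]
    rw [Matrix.mul_apply, Matrix.mul_apply, ← Finset.sum_sub_distrib]
    have sw : ∀ F : Fin n × Fin n → Fin n × Fin n → Fin n × Fin n → Fin n →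
        MvPolynomial (Fin n × Fin n) R,
        ∑ a, ∑ b, ∑ c, ∑ k, F a b c k = ∑ k, ∑ a, ∑ b, ∑ c, F a b c k := by
      intro F
      symm
      rw [Finset.sum_comm]
      refine Finset.sum_congr rfl fun a _ => ?_
      rw [Finset.sum_comm]
      refine Finset.sum_congr rfl fun b _ => ?_
      rw [Finset.sum_comm]
    rw [sw]
    refine Finset.sum_congr rfl fun k _ => ?_
    rw [mul_comm (gM n R i k), gM_sum, gM_sum]
    simp only [gQ, Matrix.of_apply, Finset.sum_mul]
    simp only [Finset.mul_sum, ← Finset.sum_sub_distrib]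
    refine Finset.sum_congr rfl fun a _ => Finset.sum_congr rfl fun b _ =>
      Finset.sum_congr rfl fun c _ => ?_
    ring

end fin

theorem final (n : ℕ) (hn : 2 ≤ n) (R : Type*) [CommRing R] [IsDomain R]
    (htf : ∀ r : R, r + r = 0 → r = 0)
    (q : upperTriangularAlgebra n R →ₗ[R] upperTriangularAlgebra n R →ₗ[R]
          upperTriangularAlgebra n R)
    (hcomm : ∀ x : upperTriangularAlgebra n R, q x x * x = x * q x x) :
    ∃ z ∈ Subring.center (upperTriangularAlgebra n R),
      ∃ μ : upperTriangularAlgebra n R →ₗ[R] upperTriangularAlgebra n R,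
        (∀ x, μ x ∈ Subring.center (upperTriangularAlgebra n R)) ∧
        ∃ p : upperTriangularAlgebra n R →ₗ[R] upperTriangularAlgebra n R →ₗ[R]
              upperTriangularAlgebra n R,
          (∀ x y, p x y ∈ Subring.center (upperTriangularAlgebra n R)) ∧
          ∀ x : upperTriangularAlgebra n R, q x x = z * x ^ 2 + μ x * x + p x x := by
  obtain ⟨r, m, f, hm, hQ⟩ := (gQ_good q htf hcomm).main hn
  obtain ⟨c, l, hl⟩ := exists_linear m hm
  let ent : upperTriangularAlgebra n R →ₗ[R] (Fin n × Fin n → R) :=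
    { toFun := fun x a => x.1 a.1 a.2
      map_add' := fun x y => rfl
      map_smul' := fun r x => rfl }
  have main : ∀ x : upperTriangularAlgebra n R,
      q x x = r • (x * x) + (c + l (ent x)) • x + (eval (ent x) f) • 1 := by
    intro x
    apply Subtype.ext
    ext i j
    rw [← gQ_eval q x, hQ]
    change _ = r * (x.1 * x.1) i j + (c + l (ent x)) * x.1 i j
      + eval (ent x) f * (1 : Matrix (Fin n) (Fin n) R) i j
    rw [← hl]
    simp only [Matrix.add_apply, Matrix.smul_apply, smul_eq_mul, map_add, map_mul, eval_C,
      gM_eval, Matrix.mul_apply, map_sum]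
    have h1 : eval (fun a : Fin n × Fin n => x.1 a.1 a.2)
        ((1 : Matrix (Fin n) (Fin n) (MvPolynomial (Fin n × Fin n) R)) i j) =
        (1 : Matrix (Fin n) (Fin n) R) i j := by
      by_cases h : i = j
      · subst h; rw [Matrix.one_apply_eq, Matrix.one_apply_eq, map_one]
      · rw [Matrix.one_apply_ne h, Matrix.one_apply_ne h, map_zero]
    rw [h1]
    rfl
  let i0 : Fin n := ⟨0, by omega⟩
  let i1 : Fin n := ⟨1, by omega⟩
  have n01 : i0 ≠ i1 := by simp [i0, i1]
  have hle01 : i0 ≤ i1 := by simp [i0, i1, Fin.le_def]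
  have hc : c = 0 := by
    apply htf
    have e1 := main (E (i0, i1))
    have e2 := main (-E (i0, i1))
    rw [map_neg, map_neg, LinearMap.neg_apply, map_neg, neg_neg, map_neg, e1,
      show -E (i0, i1) * -E (i0, i1) = (E (i0, i1) * E (i0, i1) : upperTriangularAlgebra n R) from
        Subtype.ext (neg_mul_neg (E (i0, i1) : upperTriangularAlgebra n R).1 _)] at e2
    have e3 := congrFun (congrFun (congrArg Subtype.val e2) i0) i1
    change r * _ + (c + l (ent (E (i0, i1)))) * (E (i0, i1) : upperTriangularAlgebra n R).1 i0 i1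
      + _ * (1 : Matrix (Fin n) (Fin n) R) i0 i1 = 
      r * _ + (c + - l (ent (E (i0, i1)))) * - (E (i0, i1) : upperTriangularAlgebra n R).1 i0 i1
      + _ * (1 : Matrix (Fin n) (Fin n) R) i0 i1 at e3
    rw [Matrix.one_apply_ne n01, E_apply, if_pos ⟨hle01, rfl, rfl⟩] at e3
    linear_combination e3
  subst hc
  have cen : ∀ s : R, algebraMap R (upperTriangularAlgebra n R) s ∈
      Subring.center (upperTriangularAlgebra n R) := fun s =>
    Subring.mem_center_iff.2 fun g => (Algebra.commutes s g).symm
  let ev : upperTriangularAlgebra n R →ₗ[R] R := (LinearMap.proj (i0, i0)).comp ent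
  refine ⟨algebraMap R _ r, cen r,
    (Algebra.linearMap R (upperTriangularAlgebra n R)).comp (l.comp ent), fun x => cen _,
    LinearMap.mk₂ R (fun x y => algebraMap R (upperTriangularAlgebra n R)
      (ev (q x y - r • (x * y) - l (ent x) • y))) ?_ ?_ ?_ ?_, fun x y => cen _, fun x => ?_⟩
  · intro x x' y
    rw [← map_add, ← map_add]
    congr 2
    simp only [map_add, LinearMap.add_apply, add_mul, smul_add, add_smul]
    abel
  · intro s x y
    rw [← Algebra.linearMap_apply, ← Algebra.linearMap_apply, ← map_smul, ← map_smul]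
    congr 2
    simp only [map_smul, LinearMap.smul_apply, smul_mul_assoc, smul_sub, smul_smul, smul_eq_mul,
      mul_comm]
  · intro x y y'
    rw [← map_add, ← map_add]
    congr 2
    simp only [map_add, mul_add, smul_add]
    abel
  · intro s x y
    rw [← Algebra.linearMap_apply, ← Algebra.linearMap_apply, ← map_smul, ← map_smul]
    congr 2
    simp only [map_smul, mul_smul_comm, smul_sub, smul_smul, mul_comm]
  · have h := main x
    rw [zero_add] at h
    have h1 : q x x - r • (x * x) - l (ent x) • x = (eval (ent x) f) • 1 := by rw [h]; module
    have h2 : ev (q x x - r • (x * x) - l (ent x) • x) = eval (ent x) f := by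
      rw [h1, map_smul]
      change _ * (1 : Matrix (Fin n) (Fin n) R) i0 i0 = _
      simp
    rw [LinearMap.mk₂_apply, h2, h]
    simp only [LinearMap.comp_apply, Algebra.linearMap_apply, Algebra.algebraMap_eq_smul_one,
      smul_mul_assoc, one_mul, pow_two]

end BE

/-- **Corollary 3.15 (Benkovič–Eremita).**  Let `n ≥ 2` and let `R` be a
`2`-torsionfree commutative domain.  Then for every `R`-bilinear map
`q : T_n(R) × T_n(R) → T_n(R)` on the algebra of `n × n` upper triangular matrices
over `R`, every commuting trace `T_q` of `q` is proper. -/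
theorem stmt7 (n : ℕ) (hn : 2 ≤ n) (R : Type*) [CommRing R] [IsDomain R]
    (htf : ∀ r : R, r + r = 0 → r = 0)
    (q : upperTriangularAlgebra n R →ₗ[R] upperTriangularAlgebra n R →ₗ[R]
          upperTriangularAlgebra n R)
    (hcomm : ∀ x : upperTriangularAlgebra n R, q x x * x = x * q x x) :
    ∃ z ∈ Subring.center (upperTriangularAlgebra n R),
      ∃ μ : upperTriangularAlgebra n R →ₗ[R] upperTriangularAlgebra n R,
        (∀ x, μ x ∈ Subring.center (upperTriangularAlgebra n R)) ∧
        ∃ p : upperTriangularAlgebra n R →ₗ[R] upperTriangularAlgebra n R →ₗ[R]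
              upperTriangularAlgebra n R,
          (∀ x y, p x y ∈ Subring.center (upperTriangularAlgebra n R)) ∧
          ∀ x : upperTriangularAlgebra n R, q x x = z * x ^ 2 + μ x * x + p x x := by
  exact BE.final n hn R htf q hcomm
end

section
/- Let G = [R M; N B] be a 2-torsionfree generalized matrix algebra over a commutative ring R whose (1,1)-corner is R itself, where B is a noncommutative R-algebra and both G and B are central over R (Z(G) = R·1 and Z(B) = R·1_B). Suppose that (1) every commuting R-linear map on B is proper; (2) for r ∈ R and m ∈ M, rm = 0 implies r = 0 or m = 0; and (3) there exist m₀ ∈ M and b₀ ∈ B such that m₀b₀ and m₀ are R-linearly independent. Then for every R-bilinear map q : G × G → G, every commuting trace T_q : G → G of q is proper. -/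
/-- A realization of the `R`-algebra `G` as a generalized matrix algebra
`[A M; N B]` arising from a Morita context `(A, B, M, N, Φ, Ψ)`:
`G` decomposes `R`-linearly as `A ⊕ M ⊕ N ⊕ B` (via the injections `ιA, ιM, ιN, ιB`
and the projections `pA, pM, pN, pB`), and multiplication in `G` follows the
matrix-like multiplication rules.  The bimodule actions of `A` and `B` on `M` and `N`
and the pairings `Φ : M ⊗ N → A`, `Ψ : N ⊗ M → B` are recovered from the
multiplication of `G`; the requirement that the corresponding products land in the
appropriate corner is expressed by the `mul_*` fields.  The standing assumption that
`M` is faithful as a left `A`-module and as a right `B`-module is included. -/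
structure GMA (R A B M N G : Type*) [CommRing R]
    [Ring A] [Algebra R A] [Ring B] [Algebra R B]
    [AddCommGroup M] [Module R M] [AddCommGroup N] [Module R N]
    [Ring G] [Algebra R G] where
  ιA : A →ₗ[R] G
  ιB : B →ₗ[R] G
  ιM : M →ₗ[R] G
  ιN : N →ₗ[R] G
  pA : G →ₗ[R] A
  pB : G →ₗ[R] B
  pM : G →ₗ[R] M
  pN : G →ₗ[R] N
  decomp : ∀ g : G, g = ιA (pA g) + ιM (pM g) + ιN (pN g) + ιB (pB g)
  pA_ιA : ∀ a, pA (ιA a) = a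
  pA_ιM : ∀ m, pA (ιM m) = 0
  pA_ιN : ∀ n, pA (ιN n) = 0
  pA_ιB : ∀ b, pA (ιB b) = 0
  pM_ιA : ∀ a, pM (ιA a) = 0
  pM_ιM : ∀ m, pM (ιM m) = m
  pM_ιN : ∀ n, pM (ιN n) = 0
  pM_ιB : ∀ b, pM (ιB b) = 0
  pN_ιA : ∀ a, pN (ιA a) = 0
  pN_ιM : ∀ m, pN (ιM m) = 0
  pN_ιN : ∀ n, pN (ιN n) = n
  pN_ιB : ∀ b, pN (ιB b) = 0
  pB_ιA : ∀ a, pB (ιA a) = 0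
  pB_ιM : ∀ m, pB (ιM m) = 0
  pB_ιN : ∀ n, pB (ιN n) = 0
  pB_ιB : ∀ b, pB (ιB b) = b
  one_def : (1 : G) = ιA 1 + ιB 1
  mul_AA : ∀ a a', ιA a * ιA a' = ιA (a * a')
  mul_BB : ∀ b b', ιB b * ιB b' = ιB (b * b')
  mul_AM : ∀ a m, ιA a * ιM m ∈ LinearMap.range ιM
  mul_MB : ∀ m b, ιM m * ιB b ∈ LinearMap.range ιM
  mul_BN : ∀ b n, ιB b * ιN n ∈ LinearMap.range ιN
  mul_NA : ∀ n a, ιN n * ιA a ∈ LinearMap.range ιN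
  mul_MN : ∀ m n, ιM m * ιN n ∈ LinearMap.range ιA
  mul_NM : ∀ n m, ιN n * ιM m ∈ LinearMap.range ιB
  mul_AB : ∀ a b, ιA a * ιB b = 0
  mul_BA : ∀ b a, ιB b * ιA a = 0
  mul_AN : ∀ a n, ιA a * ιN n = 0
  mul_NB : ∀ n b, ιN n * ιB b = 0
  mul_MA : ∀ m a, ιM m * ιA a = 0
  mul_BM : ∀ b m, ιB b * ιM m = 0
  mul_MM : ∀ m m', ιM m * ιM m' = 0
  mul_NN : ∀ n n', ιN n * ιN n' = 0
  faithful_left : ∀ a : A, (∀ m : M, ιA a * ιM m = 0) → a = 0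
  faithful_right : ∀ b : B, (∀ m : M, ιM m * ιB b = 0) → b = 0


set_option linter.unusedSimpArgs false
namespace GMA

variable {R B M N G : Type*} [CommRing R]
    [Ring B] [Algebra R B]
    [AddCommGroup M] [Module R M] [AddCommGroup N] [Module R N]
    [Ring G] [Algebra R G] (h : GMA R R B M N G)

noncomputable def mb : M →ₗ[R] B →ₗ[R] M :=
  ((LinearMap.mul R G).compl₁₂ h.ιM h.ιB).compr₂ h.pM
noncomputable def bn : B →ₗ[R] N →ₗ[R] N :=
  ((LinearMap.mul R G).compl₁₂ h.ιB h.ιN).compr₂ h.pN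
noncomputable def mn : M →ₗ[R] N →ₗ[R] R :=
  ((LinearMap.mul R G).compl₁₂ h.ιM h.ιN).compr₂ h.pA
noncomputable def nm : N →ₗ[R] M →ₗ[R] B :=
  ((LinearMap.mul R G).compl₁₂ h.ιN h.ιM).compr₂ h.pB

theorem M_B (m : M) (b : B) : h.ιM m * h.ιB b = h.ιM (h.mb m b) := by
  obtain ⟨y, hy⟩ := h.mul_MB m b
  simp [mb, ← hy, h.pM_ιM]
theorem B_N (b : B) (n : N) : h.ιB b * h.ιN n = h.ιN (h.bn b n) := by
  obtain ⟨y, hy⟩ := h.mul_BN b n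
  simp [bn, ← hy, h.pN_ιN]
theorem M_N (m : M) (n : N) : h.ιM m * h.ιN n = h.ιA (h.mn m n) := by
  obtain ⟨y, hy⟩ := h.mul_MN m n
  simp [mn, ← hy, h.pA_ιA]
theorem N_M (n : N) (m : M) : h.ιN n * h.ιM m = h.ιB (h.nm n m) := by
  obtain ⟨y, hy⟩ := h.mul_NM n m
  simp [nm, ← hy, h.pB_ιB]
theorem A_eq (a : R) : h.ιA a = a • h.ιA 1 := by
  rw [← map_smul]; simp
theorem A_M (a : R) (m : M) : h.ιA a * h.ιM m = h.ιM (a • m) := by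
  have e : (1 : G) * h.ιM m = h.ιM m := one_mul _
  rw [h.one_def, add_mul, h.mul_BM, add_zero] at e
  rw [h.A_eq, smul_mul_assoc, e, map_smul]
theorem N_A (n : N) (a : R) : h.ιN n * h.ιA a = h.ιN (a • n) := by
  have e : h.ιN n * (1 : G) = h.ιN n := mul_one _
  rw [h.one_def, mul_add, h.mul_NB, add_zero] at e
  rw [h.A_eq, mul_smul_comm, e, map_smul]

theorem injM {m m' : M} (e : h.ιM m = h.ιM m') : m = m' := by
  rw [← h.pM_ιM m, e, h.pM_ιM]
theorem injN {m m' : N} (e : h.ιN m = h.ιN m') : m = m' := by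
  rw [← h.pN_ιN m, e, h.pN_ιN]
theorem injB {m m' : B} (e : h.ιB m = h.ιB m') : m = m' := by
  rw [← h.pB_ιB m, e, h.pB_ιB]

theorem mb_one (m : M) : h.mb m 1 = m := by
  apply h.injM
  have e : h.ιM m * (1 : G) = h.ιM m := mul_one _
  rw [h.one_def, mul_add, h.mul_MA, zero_add] at e
  rw [← h.M_B, e]
theorem bn_one (n : N) : h.bn 1 n = n := by
  apply h.injN
  have e : (1 : G) * h.ιN n = h.ιN n := one_mul _
  rw [h.one_def, add_mul, h.mul_AN, zero_add] at e
  rw [← h.B_N, e]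
theorem mb_mul (m : M) (b b' : B) : h.mb m (b * b') = h.mb (h.mb m b) b' := by
  apply h.injM
  simp only [← h.M_B, ← h.mul_BB, mul_assoc]
theorem mb_nm (m : M) (n : N) (m' : M) : h.mb m (h.nm n m') = h.mn m n • m' := by
  apply h.injM
  rw [← h.M_B, ← h.A_M, ← h.N_M, ← h.M_N, mul_assoc]
theorem mb_alg (m : M) (r : R) : h.mb m (algebraMap R B r) = r • m := by
  rw [Algebra.algebraMap_eq_smul_one, map_smul, mb_one]
theorem bn_alg (n : N) (r : R) : h.bn (algebraMap R B r) n = r • n := by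
  rw [Algebra.algebraMap_eq_smul_one, map_smul, LinearMap.smul_apply, bn_one]
theorem faith (b : B) (hb : ∀ m, h.mb m b = 0) : b = 0 := by
  apply h.faithful_right
  intro m; rw [h.M_B, hb, map_zero]

def com (g x : G) : G := g * x - x * g

theorem exi (g : G) : ∃ a m n b, g = h.ιA a + h.ιM m + h.ιN n + h.ιB b :=
  ⟨_, _, _, _, h.decomp g⟩

theorem MM (g : G) (m : M) : h.pM (com g (h.ιM m)) = h.pA g • m - h.mb m (h.pB g) := by
  obtain ⟨a, p, u, d, rfl⟩ := h.exi g
  simp [com, mul_add, add_mul, h.M_B, h.A_M, h.N_M, h.M_N, h.mul_BM, h.mul_MA, h.mul_MM,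
    h.pM_ιA, h.pM_ιM, h.pM_ιN, h.pM_ιB, h.pA_ιA, h.pA_ιM, h.pA_ιN, h.pA_ιB,
    h.pB_ιA, h.pB_ιM, h.pB_ιN, h.pB_ιB]
theorem MN (g : G) (n : N) : h.pM (com g (h.ιN n)) = 0 := by
  obtain ⟨a, p, u, d, rfl⟩ := h.exi g
  simp [com, mul_add, add_mul, h.M_N, h.N_M, h.B_N, h.N_A, h.mul_AN, h.mul_NB, h.mul_NN,
    h.pM_ιA, h.pM_ιM, h.pM_ιN, h.pM_ιB]
theorem MB (g : G) (b : B) : h.pM (com g (h.ιB b)) = h.mb (h.pM g) b := by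
  obtain ⟨a, p, u, d, rfl⟩ := h.exi g
  simp [com, mul_add, add_mul, h.M_B, h.B_N, h.mul_BB, h.mul_AB, h.mul_BA, h.mul_NB, h.mul_BM,
    h.pM_ιA, h.pM_ιM, h.pM_ιN, h.pM_ιB]
theorem NM (g : G) (m : M) : h.pN (com g (h.ιM m)) = 0 := by
  obtain ⟨a, p, u, d, rfl⟩ := h.exi g
  simp [com, mul_add, add_mul, h.M_B, h.A_M, h.N_M, h.M_N, h.mul_BM, h.mul_MA, h.mul_MM,
    h.pN_ιA, h.pN_ιM, h.pN_ιN, h.pN_ιB]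
theorem NN (g : G) (n : N) : h.pN (com g (h.ιN n)) = h.bn (h.pB g) n - h.pA g • n := by
  obtain ⟨a, p, u, d, rfl⟩ := h.exi g
  simp [com, mul_add, add_mul, h.M_N, h.N_M, h.B_N, h.N_A, h.mul_AN, h.mul_NB, h.mul_NN,
    h.pN_ιA, h.pN_ιM, h.pN_ιN, h.pN_ιB, h.pA_ιA, h.pA_ιM, h.pA_ιN, h.pA_ιB,
    h.pB_ιA, h.pB_ιM, h.pB_ιN, h.pB_ιB]
theorem NB (g : G) (b : B) : h.pN (com g (h.ιB b)) = - h.bn b (h.pN g) := by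
  obtain ⟨a, p, u, d, rfl⟩ := h.exi g
  simp [com, mul_add, add_mul, h.M_B, h.B_N, h.mul_BB, h.mul_AB, h.mul_BA, h.mul_NB, h.mul_BM,
    h.pN_ιA, h.pN_ιM, h.pN_ιN, h.pN_ιB]
theorem BM (g : G) (m : M) : h.pB (com g (h.ιM m)) = h.nm (h.pN g) m := by
  obtain ⟨a, p, u, d, rfl⟩ := h.exi g
  simp [com, mul_add, add_mul, h.M_B, h.A_M, h.N_M, h.M_N, h.mul_BM, h.mul_MA, h.mul_MM,
    h.pN_ιA, h.pN_ιM, h.pN_ιN, h.pN_ιB, h.pB_ιA, h.pB_ιM, h.pB_ιN, h.pB_ιB]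
theorem BN (g : G) (n : N) : h.pB (com g (h.ιN n)) = - h.nm n (h.pM g) := by
  obtain ⟨a, p, u, d, rfl⟩ := h.exi g
  simp [com, mul_add, add_mul, h.M_N, h.N_M, h.B_N, h.N_A, h.mul_AN, h.mul_NB, h.mul_NN,
    h.pM_ιA, h.pM_ιM, h.pM_ιN, h.pM_ιB, h.pB_ιA, h.pB_ιM, h.pB_ιN, h.pB_ιB]
theorem BB (g : G) (b : B) : h.pB (com g (h.ιB b)) = h.pB g * b - b * h.pB g := by
  obtain ⟨a, p, u, d, rfl⟩ := h.exi g
  simp [com, mul_add, add_mul, h.M_B, h.B_N, h.mul_BB, h.mul_AB, h.mul_BA, h.mul_NB, h.mul_BM,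
    h.pB_ιA, h.pB_ιM, h.pB_ιN, h.pB_ιB]

theorem alg_eq (r : R) : algebraMap R G r = h.ιA r + h.ιB (algebraMap R B r) := by
  rw [Algebra.algebraMap_eq_smul_one, h.one_def, smul_add, ← map_smul, ← map_smul,
    Algebra.algebraMap_eq_smul_one]
  simp

/-- recognizing scalars -/
theorem scal {g : G} (r : R) (hA : h.pA g = r) (hP : h.pM g = 0) (hQ : h.pN g = 0)
    (hD : h.pB g = algebraMap R B r) : algebraMap R G r = g := by
  rw [h.decomp g, hP, hQ, hD, hA, h.alg_eq]; simp

theorem linScal (hinj : Function.Injective (algebraMap R B)) {V : Type*} [AddCommGroup V]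
    [Module R V] (f : V →ₗ[R] B) (hf : ∀ v, ∃ r, algebraMap R B r = f v) :
    ∃ g : V →ₗ[R] R, ∀ v, f v = algebraMap R B (g v) := by
  let e := LinearEquiv.ofInjective (Algebra.linearMap R B) hinj
  refine ⟨e.symm.toLinearMap ∘ₗ f.codRestrict (LinearMap.range (Algebra.linearMap R B))
    (fun v => by obtain ⟨r, hr⟩ := hf v; exact ⟨r, hr⟩), fun v => ?_⟩
  have := congrArg Subtype.val (e.apply_symm_apply (f.codRestrict
    (LinearMap.range (Algebra.linearMap R B))
    (fun v => by obtain ⟨r, hr⟩ := hf v; exact ⟨r, hr⟩) v))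
  exact this.symm

end GMA

namespace GMA

variable {R B M N G : Type*} [CommRing R]
    [Ring B] [Algebra R B]
    [AddCommGroup M] [Module R M] [AddCommGroup N] [Module R N]
    [Ring G] [Algebra R G] (h : GMA R R B M N G)

theorem nm_bn (b : B) (n : N) (m : M) : h.nm (h.bn b n) m = b * h.nm n m := by
  apply h.injB
  rw [← h.N_M, ← h.B_N, ← h.mul_BB, ← h.N_M, mul_assoc]
theorem nm_mb (n : N) (m : M) (b : B) : h.nm n (h.mb m b) = h.nm n m * b := by
  apply h.injB
  rw [← h.N_M, ← h.M_B, ← h.mul_BB, ← h.N_M, mul_assoc]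
theorem faith' {b b' : B} (hb : ∀ m, h.mb m b = h.mb m b') : b = b' := by
  rw [← sub_eq_zero]; apply h.faith; intro m; rw [map_sub, hb, sub_self]

theorem lin (h2 : ∀ (r : R) (m : M), r • m = 0 → r = 0 ∨ m = 0)
    (cB : ∀ b : B, (∀ b', b * b' - b' * b = 0) → ∃ r, algebraMap R B r = b)
    (S : G →ₗ[R] G) (I0 : ∀ x, com (S x) x = 0)
    (I1 : ∀ x y, com (S x) y + com (S y) x = 0) :
    ∃ s : R, ∀ m n b, ∃ r : R, algebraMap R G r =
      S (h.ιM m + h.ιN n + h.ιB b) - s • (h.ιM m + h.ιN n + h.ιB b) := by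
  have PSn : ∀ n, h.pM (S (h.ιN n)) = 0 := fun n => by
    simpa [h.MB, h.MN, h.mb_one] using congrArg h.pM (I1 (h.ιN n) (h.ιB 1))
  have PSe : h.pM (S (h.ιB 1)) = 0 := by
    simpa [h.MB, h.MN, h.mb_one] using congrArg h.pM (I0 (h.ιB 1))
  have PSb : ∀ b, h.pM (S (h.ιB b)) = 0 := fun b => by
    simpa [h.MB, h.MN, h.mb_one, PSe] using congrArg h.pM (I1 (h.ιB b) (h.ιB 1))
  have QSm : ∀ n, h.pN (S (h.ιM n)) = 0 := fun n => by
    simpa [h.NB, h.NM, h.bn_one] using congrArg h.pN (I1 (h.ιM n) (h.ιB 1))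
  have QSe : h.pN (S (h.ιB 1)) = 0 := by
    simpa [h.NB, h.NM, h.bn_one] using congrArg h.pN (I0 (h.ιB 1))
  have QSb : ∀ b, h.pN (S (h.ιB b)) = 0 := fun b => by
    simpa [h.NB, h.NM, h.bn_one, QSe] using congrArg h.pN (I1 (h.ιB b) (h.ιB 1))
  have DSn : ∀ n, h.pB (S (h.ιN n)) = algebraMap R B (h.pA (S (h.ιN n))) := fun n => by
    apply h.faith'; intro m
    have := congrArg h.pM (I1 (h.ιM m) (h.ιN n))
    simp only [map_add, h.MN, h.MM, map_zero] at this
    rw [h.mb_alg]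
    linear_combination (norm := module) -this
  obtain ⟨t, ht⟩ := cB (h.pB (S (h.ιB 1))) (fun b => by
    simpa [h.BB] using congrArg h.pB (I1 (h.ιB b) (h.ιB 1)))
  set s := t - h.pA (S (h.ιB 1)) with hs
  have key : ∀ m b, h.mb (h.pM (S (h.ιM m))) b + (h.pA (S (h.ιB b)) • m
      - h.mb m (h.pB (S (h.ιB b)))) = 0 := fun m b => by
    simpa [h.MB, h.MM] using congrArg h.pM (I1 (h.ιM m) (h.ιB b))
  have PSm : ∀ m, h.pM (S (h.ιM m)) = s • m := fun m => by
    have := key m 1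
    rw [← ht, h.mb_alg, h.mb_one] at this
    rw [hs]
    linear_combination (norm := module) this
  have DSb : ∀ b, h.pB (S (h.ιB b)) = algebraMap R B (h.pA (S (h.ιB b))) + s • b := fun b => by
    apply h.faith'; intro m
    have := key m b
    rw [PSm, map_smul, LinearMap.smul_apply] at this
    rw [map_add, h.mb_alg, map_smul]
    linear_combination (norm := module) -this
  have QSn : ∀ n, h.pN (S (h.ιN n)) = s • n := fun n => by
    have := congrArg h.pN (I1 (h.ιN n) (h.ιB 1))
    simp only [map_add, h.NB, h.NN, ← ht, h.bn_alg, h.bn_one, map_zero] at this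
    rw [hs]
    linear_combination (norm := module) -this
  have DSm : ∀ m, h.pB (S (h.ιM m)) = algebraMap R B (h.pA (S (h.ιM m))) := fun m => by
    obtain ⟨r, hr⟩ := cB (h.pB (S (h.ιM m))) (fun b => by
      simpa [h.BB, h.BM, QSb] using congrArg h.pB (I1 (h.ιM m) (h.ιB b)))
    have := congrArg h.pM (I0 (h.ιM m))
    rw [h.MM, ← hr, h.mb_alg, ← sub_smul, map_zero] at this
    rcases h2 _ _ this with h' | h'
    · rw [← hr, sub_eq_zero.1 h']
    · simp [h']
  refine ⟨s, fun m n b => ⟨_, h.scal _ rfl ?_ ?_ ?_⟩⟩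
  · simp [PSn, PSm, PSb, h.pM_ιM, h.pM_ιN, h.pM_ιB]
  · simp [QSn, QSm, QSb, h.pN_ιM, h.pN_ιN, h.pN_ιB]
  · simp [DSn, DSm, DSb, h.pB_ιM, h.pB_ιN, h.pB_ιB, h.pA_ιM, h.pA_ιN, h.pA_ιB]
    abel

theorem core (hinj : Function.Injective (algebraMap R B))
    (h2 : ∀ (r : R) (m : M), r • m = 0 → r = 0 ∨ m = 0)
    (cB : ∀ b : B, (∀ b', b * b' - b' * b = 0) → ∃ r, algebraMap R B r = b)
    (h1 : ∀ f : B →ₗ[R] B, (∀ b, f b * b - b * f b = 0) →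
            ∃ z : R, ∃ η : B →ₗ[R] R, ∀ b, f b = z • b + algebraMap R B (η b))
    (m₀ : M) (b₀ : B) (hm₀ : m₀ ≠ 0)
    (h3 : ∀ r s : R, r • h.mb m₀ b₀ + s • m₀ = 0 → r = 0 ∧ s = 0)
    (T : G → G) (S : G →ₗ[R] G →ₗ[R] G) (Ssymm : ∀ x y, S x y = S y x)
    (Tadd : ∀ x y, T (x + y) = T x + T y + S x y)
    (I0 : ∀ x, com (T x) x = 0)
    (II : ∀ x y, com (T x) y + com (S x y) x = 0)
    (III : ∀ x y z, com (S x y) z + com (S y z) x + com (S x z) y = 0) :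
    ∃ (z : R) (w : M →ₗ[R] R) (d : N →ₗ[R] R) (η : B →ₗ[R] R), ∀ m n b, ∃ r : R,
      algebraMap R G r = T (h.ιM m + h.ιN n + h.ιB b)
        - z • ((h.ιM m + h.ιN n + h.ιB b) * (h.ιM m + h.ιN n + h.ιB b))
        - (w m + d n + η b) • (h.ιM m + h.ιN n + h.ιB b) := by
  -- vanishing
  have PTe : h.pM (T (h.ιB 1)) = 0 := by
    simpa [h.MB, h.mb_one] using congrArg h.pM (I0 (h.ιB 1))
  have QTe : h.pN (T (h.ιB 1)) = 0 := by
    simpa [h.NB, h.bn_one] using congrArg h.pN (I0 (h.ιB 1))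
  have PSeb : ∀ b, h.pM (S (h.ιB b) (h.ιB 1)) = 0 := fun b => by
    rw [Ssymm]
    simpa [h.MB, h.mb_one, PTe] using congrArg h.pM (II (h.ιB 1) (h.ιB b))
  have QSeb : ∀ b, h.pN (S (h.ιB b) (h.ιB 1)) = 0 := fun b => by
    rw [Ssymm]
    simpa [h.NB, h.bn_one, QTe] using congrArg h.pN (II (h.ιB 1) (h.ιB b))
  have PTb : ∀ b, h.pM (T (h.ιB b)) = 0 := fun b => by
    simpa [h.MB, h.mb_one, PSeb] using congrArg h.pM (II (h.ιB b) (h.ιB 1))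
  have QTb : ∀ b, h.pN (T (h.ιB b)) = 0 := fun b => by
    simpa [h.NB, h.bn_one, QSeb] using congrArg h.pN (II (h.ιB b) (h.ιB 1))
  have PTn : ∀ n, h.pM (T (h.ιN n)) = 0 := fun n => by
    simpa [h.MB, h.MN, h.mb_one] using congrArg h.pM (II (h.ιN n) (h.ιB 1))
  have QTm : ∀ n, h.pN (T (h.ιM n)) = 0 := fun n => by
    simpa [h.NB, h.NM, h.bn_one] using congrArg h.pN (II (h.ιM n) (h.ιB 1))
  have PSne : ∀ n, h.pM (S (h.ιN n) (h.ιB 1)) = 0 := fun n => by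
    rw [Ssymm]
    simpa [h.MB, h.MN, h.mb_one, PTe] using congrArg h.pM (II (h.ιB 1) (h.ιN n))
  have QSme : ∀ n, h.pN (S (h.ιM n) (h.ιB 1)) = 0 := fun n => by
    rw [Ssymm]
    simpa [h.NB, h.NM, h.bn_one, QTe] using congrArg h.pN (II (h.ιB 1) (h.ιM n))
  have PSnb : ∀ n b, h.pM (S (h.ιN n) (h.ιB b)) = 0 := fun n b => by
    simpa [h.MB, h.MN, h.mb_one, PSne] using congrArg h.pM (III (h.ιN n) (h.ιB b) (h.ιB 1))
  have QSmb : ∀ n b, h.pN (S (h.ιM n) (h.ιB b)) = 0 := fun n b => by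
    simpa [h.NB, h.NM, h.bn_one, QSme] using congrArg h.pN (III (h.ιM n) (h.ιB b) (h.ιB 1))
  -- d
  have c1 : ∀ n, ∃ r, algebraMap R B r = h.pB (S (h.ιN n) (h.ιB 1)) := fun n => by
    apply cB; intro b
    simpa [h.BB, h.BN, PSeb] using congrArg h.pB (III (h.ιN n) (h.ιB b) (h.ιB 1))
  obtain ⟨d', hd'⟩ := linScal hinj (h.pB ∘ₗ S.flip (h.ιB 1) ∘ₗ h.ιN) (fun n => by simpa using c1 n)
  let d : N →ₗ[R] R := d' - h.pA ∘ₗ S.flip (h.ιB 1) ∘ₗ h.ιN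
  have hd : ∀ n, h.pB (S (h.ιN n) (h.ιB 1)) =
      algebraMap R B (d n + h.pA (S (h.ιN n) (h.ιB 1))) := fun n => by
    have := hd' n
    simp at this
    simp [d, this]
  have kmnb : ∀ m n b, h.mb (h.pM (S (h.ιM m) (h.ιN n))) b + (h.pA (S (h.ιN n) (h.ιB b)) • m
      - h.mb m (h.pB (S (h.ιN n) (h.ιB b)))) = 0 := fun m n b => by
    simpa [h.MB, h.MM, h.MN] using congrArg h.pM (III (h.ιM m) (h.ιN n) (h.ιB b))
  have PSmn : ∀ m n, h.pM (S (h.ιM m) (h.ιN n)) = d n • m := fun m n => by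
    have := kmnb m n 1
    rw [hd, h.mb_alg, h.mb_one] at this
    linear_combination (norm := module) this
  have DSnb : ∀ n b, h.pB (S (h.ιN n) (h.ιB b)) =
      algebraMap R B (h.pA (S (h.ιN n) (h.ιB b))) + d n • b := fun n b => by
    apply h.faith'; intro m
    have := kmnb m n b
    rw [PSmn, map_smul, LinearMap.smul_apply] at this
    rw [map_add, h.mb_alg, map_smul]
    linear_combination (norm := module) -this
  have QTn : ∀ n, h.pN (T (h.ιN n)) = d n • n := fun n => by
    have := congrArg h.pN (II (h.ιN n) (h.ιB 1))
    simp only [map_add, h.NB, h.NN, hd, h.bn_alg, h.bn_one, map_zero, LinearMap.add_apply] at this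
    linear_combination (norm := module) -this
  have DTn : ∀ n, h.pB (T (h.ιN n)) = algebraMap R B (h.pA (T (h.ιN n))) := fun n => by
    apply h.faith'; intro m
    have := congrArg h.pM (II (h.ιN n) (h.ιM m))
    simp only [map_add, h.MN, h.MM, map_zero] at this
    rw [h.mb_alg]
    linear_combination (norm := module) -this
  -- E
  obtain ⟨ε', hε'⟩ := cB (h.pB (T (h.ιB 1))) (fun b => by
    simpa [h.BB] using congrArg h.pB (II (h.ιB 1) (h.ιB b)))
  set ε := ε' - h.pA (T (h.ιB 1)) with hε
  have PSme : ∀ m, h.pM (S (h.ιM m) (h.ιB 1)) = ε • m := fun m => by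
    have := congrArg h.pM (II (h.ιB 1) (h.ιM m))
    simp only [map_add, h.MB, h.MM, ← hε', h.mb_alg, h.mb_one, map_zero] at this
    rw [Ssymm, hε]
    linear_combination (norm := module) this
  have QSne : ∀ n, h.pN (S (h.ιN n) (h.ιB 1)) = ε • n := fun n => by
    have := congrArg h.pN (II (h.ιB 1) (h.ιN n))
    simp only [map_add, h.NB, h.NN, ← hε', h.bn_alg, h.bn_one, map_zero] at this
    rw [Ssymm, hε]
    linear_combination (norm := module) -this
  let E : B →ₗ[R] B := h.pB ∘ₗ S.flip (h.ιB 1) ∘ₗ h.ιB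
    - Algebra.linearMap R B ∘ₗ h.pA ∘ₗ S.flip (h.ιB 1) ∘ₗ h.ιB - ε • LinearMap.id
  have hE : ∀ b, h.pB (S (h.ιB b) (h.ιB 1)) = E b + algebraMap R B (h.pA (S (h.ιB b) (h.ιB 1)))
      + ε • b := fun b => by simp only [E, LinearMap.sub_apply, LinearMap.comp_apply, LinearMap.flip_apply, LinearMap.smul_apply, LinearMap.id_apply, Algebra.linearMap_apply]; abel
  obtain ⟨z, η, hη⟩ := h1 E (fun b => by
    have := congrArg h.pB (II (h.ιB b) (h.ιB 1))
    simp only [map_add, h.BB, hE, mul_one, one_mul, sub_self, zero_add, map_zero] at this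
    rw [← this]
    simp only [add_mul, mul_add, Algebra.commutes, smul_mul_assoc, mul_smul_comm]
    abel)
  have PSmb : ∀ m b, h.pM (S (h.ιM m) (h.ιB b)) = z • h.mb m b + η b • m := fun m b => by
    have := congrArg h.pM (III (h.ιM m) (h.ιB b) (h.ιB 1))
    simp only [map_add, h.MB, h.MM, hE, hη, h.mb_one, h.mb_alg, map_zero, PSme, map_smul,
      LinearMap.smul_apply] at this
    linear_combination (norm := module) this
  have DTb : ∀ b, h.pB (T (h.ιB b)) = algebraMap R B (h.pA (T (h.ιB b))) + z • (b * b) + η b • b :=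
      fun b => by
    apply h.faith'; intro m
    have := congrArg h.pM (II (h.ιB b) (h.ιM m))
    rw [Ssymm] at this
    simp only [map_add, h.MB, h.MM, PSmb, map_zero, map_smul, LinearMap.add_apply,
      LinearMap.smul_apply] at this
    simp only [map_add, h.mb_alg, map_smul, h.mb_mul]
    linear_combination (norm := module) -this
  have QSnb : ∀ n b, h.pN (S (h.ιN n) (h.ιB b)) = z • h.bn b n + η b • n := fun n b => by
    have := congrArg h.pN (III (h.ιN n) (h.ιB b) (h.ιB 1))
    simp only [map_add, h.NB, h.NN, hE, hη, h.bn_one, h.bn_alg, map_zero, QSne, map_smul,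
      LinearMap.smul_apply, LinearMap.add_apply] at this
    linear_combination (norm := module) -this
  -- w
  have c2 : ∀ n, ∃ r, algebraMap R B r = h.pB (S (h.ιM n) (h.ιB 1)) := fun n => by
    apply cB; intro b
    simpa [h.BB, h.BM, QSeb] using congrArg h.pB (III (h.ιM n) (h.ιB b) (h.ιB 1))
  obtain ⟨w', hw'⟩ := linScal hinj (h.pB ∘ₗ S.flip (h.ιB 1) ∘ₗ h.ιM) (fun n => by simpa using c2 n)
  let w : M →ₗ[R] R := w' - h.pA ∘ₗ S.flip (h.ιB 1) ∘ₗ h.ιM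
  have hw : ∀ n, h.pB (S (h.ιM n) (h.ιB 1)) =
      algebraMap R B (w n + h.pA (S (h.ιM n) (h.ιB 1))) := fun n => by
    have := hw' n
    simp at this
    simp [w, this]
  have kmmb : ∀ m b, h.mb (h.pM (T (h.ιM m))) b + (h.pA (S (h.ιM m) (h.ιB b)) • m
      - h.mb m (h.pB (S (h.ιM m) (h.ιB b)))) = 0 := fun m b => by
    simpa [h.MB, h.MM, h.MN] using congrArg h.pM (II (h.ιM m) (h.ιB b))
  have PTm : ∀ m, h.pM (T (h.ιM m)) = w m • m := fun m => by
    have := kmmb m 1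
    rw [hw, h.mb_alg, h.mb_one] at this
    linear_combination (norm := module) this
  obtain ⟨X, hX⟩ : ∃ X : M → B → B, ∀ m b, X m b = h.pB (S (h.ιM m) (h.ιB b))
      - algebraMap R B (h.pA (S (h.ιM m) (h.ιB b))) - w m • b := ⟨_, fun _ _ => rfl⟩
  have X0 : ∀ m b, h.mb m (X m b) = 0 := fun m b => by
    have := kmmb m b
    rw [PTm, map_smul, LinearMap.smul_apply] at this
    rw [hX, map_sub, map_sub, h.mb_alg, map_smul]
    linear_combination (norm := module) -this
  have Xadd : ∀ m m' b, X (m + m') b = X m b + X m' b := fun m m' b => by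
    simp only [hX, map_add, LinearMap.add_apply, add_smul]; abel
  have X1 : ∀ m m' b, h.mb m (X m' b) + h.mb m' (X m b) = 0 := fun m m' b => by
    have := X0 (m + m') b
    rw [Xadd, map_add, map_add, LinearMap.add_apply, LinearMap.add_apply, X0, X0] at this
    simpa [add_comm] using this
  have Xf : ∀ m, ∃ k : R, ∀ b, ∃ c : R, X m b = k • b + algebraMap R B c := fun m => by
    obtain ⟨k, θ, hk⟩ := h1 (h.pB ∘ₗ S (h.ιM m) ∘ₗ h.ιB) (fun b => by
      have := congrArg h.pB (II (h.ιB b) (h.ιM m))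
      rw [Ssymm] at this
      simpa [h.BB, h.BM, QTb] using this)
    refine ⟨k - w m, fun b => ⟨θ b - h.pA (S (h.ιM m) (h.ιB b)), ?_⟩⟩
    have := hk b
    simp only [LinearMap.comp_apply] at this
    rw [hX, this, map_sub, sub_smul]; abel
  have X2 : ∀ m, (∀ b, h.mb m₀ (X m b) = 0) → ∀ b, X m b = 0 := fun m hm b => by
    obtain ⟨k, hk⟩ := Xf m
    obtain ⟨c, hc⟩ := hk b₀
    have e := hm b₀
    rw [hc, map_add, map_smul, h.mb_alg] at e
    have k0 := (h3 _ _ e).1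
    obtain ⟨c, hc⟩ := hk b
    have e := hm b
    rw [hc, map_add, map_smul, h.mb_alg, k0, zero_smul, zero_add] at e
    rcases h2 _ _ e with e | e
    · rw [hc, k0, e]; simp
    · exact absurd e hm₀
  have Xm0 := X2 m₀ (X0 m₀)
  have Xz : ∀ m b, X m b = 0 := fun m => X2 m (fun b => by
    have := X1 m m₀ b
    simpa [Xm0] using this)
  have DSmb : ∀ m b, h.pB (S (h.ιM m) (h.ιB b)) =
      algebraMap R B (h.pA (S (h.ιM m) (h.ιB b))) + w m • b := fun m b => by
    have := hX m b
    rw [Xz] at this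
    linear_combination (norm := module) -this
  have QSmn : ∀ m n, h.pN (S (h.ιM m) (h.ιN n)) = w m • n := fun m n => by
    have := congrArg h.pN (III (h.ιM m) (h.ιN n) (h.ιB 1))
    simp only [map_add, h.NB, h.NN, h.NM, DSmb, h.bn_one, h.bn_alg, map_zero, map_smul,
      LinearMap.smul_apply, LinearMap.add_apply] at this
    linear_combination (norm := module) -this
  have T0 : T 0 = 0 := by simpa using Tadd 0 0
  have DTm : ∀ m, h.pB (T (h.ιM m)) = algebraMap R B (h.pA (T (h.ιM m))) := fun m => by
    obtain ⟨r, hr⟩ := cB (h.pB (T (h.ιM m))) (fun b => by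
      simpa [h.BB, h.BM, QSmb] using congrArg h.pB (II (h.ιM m) (h.ιB b)))
    have := congrArg h.pM (I0 (h.ιM m))
    rw [h.MM, ← hr, h.mb_alg, ← sub_smul, map_zero] at this
    rcases h2 _ _ this with h' | h'
    · rw [← hr, sub_eq_zero.1 h']
    · simp [h', T0]
  have DSmn : ∀ m n, h.pB (S (h.ιM m) (h.ιN n)) =
      algebraMap R B (h.pA (S (h.ιM m) (h.ιN n)) - z * h.mn m n) + z • h.nm n m := fun m n => by
    obtain ⟨r, hr⟩ := cB (h.pB (S (h.ιM m) (h.ιN n)) - z • h.nm n m) (fun b => by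
      have := congrArg h.pB (III (h.ιM m) (h.ιN n) (h.ιB b))
      simp only [map_add, h.BB, h.BM, h.BN, QSnb, PSmb, map_zero, map_smul,
        LinearMap.smul_apply, LinearMap.add_apply, h.nm_bn, h.nm_mb] at this
      rw [sub_mul, mul_sub, smul_mul_assoc, mul_smul_comm]
      linear_combination (norm := module) this)
    have hr' : h.pB (S (h.ιM m) (h.ιN n)) = algebraMap R B r + z • h.nm n m := by
      rw [hr]; abel
    have := congrArg h.pM (II (h.ιM m) (h.ιN n))
    simp only [map_add, h.MM, h.MN, hr', h.mb_alg, map_smul, h.mb_nm, map_zero, zero_add] at this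
    have e : (h.pA (S (h.ιM m) (h.ιN n)) - r - z * h.mn m n) • m = 0 := by
      linear_combination (norm := module) this
    rcases h2 _ _ e with h' | h'
    · rw [hr']; congr 2; linear_combination -h'
    · simp [h']
  refine ⟨z, w, d, η, fun m n b => ⟨_, h.scal _ rfl ?_ ?_ ?_⟩⟩
  all_goals
    simp only [Tadd, map_add, map_sub, map_smul, LinearMap.add_apply, mul_add, add_mul, h.M_B,
      h.N_M, h.M_N, h.B_N, h.mul_BB, h.mul_NB, h.mul_BM, h.mul_MM, h.mul_NN, map_zero,
      PTb, QTb, PTn, QTm, PSnb, QSmb, PSmn, DSnb, QTn, DTn, PSmb, DTb, QSnb, PTm, DSmb, QSmn, DTm,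
      DSmn, h.pM_ιA, h.pM_ιM, h.pM_ιN, h.pM_ιB, h.pN_ιA, h.pN_ιM, h.pN_ιN, h.pN_ιB,
      h.pB_ιA, h.pB_ιM, h.pB_ιN, h.pB_ιB, h.pA_ιA, h.pA_ιM, h.pA_ιN, h.pA_ιB]
  · module
  · module
  · simp only [smul_eq_mul, Algebra.algebraMap_eq_smul_one]
    module

end GMA
/-- **Proposition 3.17.**  Let `G = [R M; N B]` be a `2`-torsionfree generalized
matrix algebra over a commutative ring `R` whose `(1,1)`-corner is `R` itself, where
`B` is a noncommutative `R`-algebra and both `G` and `B` are central over `R`.  If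
(1) every commuting `R`-linear map on `B` is proper,
(2) for `r ∈ R` and `m ∈ M`, `r m = 0` implies `r = 0` or `m = 0`, and
(3) there exist `m₀ ∈ M` and `b₀ ∈ B` such that `m₀ b₀` and `m₀` are `R`-linearly
independent, then for every `R`-bilinear map `q : G × G → G`, every commuting trace
`T_q` of `q` is proper. -/
theorem stmt8 (R B M N G : Type*) [CommRing R]
    [Ring B] [Algebra R B]
    [AddCommGroup M] [Module R M] [AddCommGroup N] [Module R N]
    [Ring G] [Algebra R G]
    (h : GMA R R B M N G)
    (hMN : (∃ m : M, m ≠ 0) ∨ (∃ n : N, n ≠ 0))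
    (htf : ∀ g : G, g + g = 0 → g = 0)
    (hBnc : ∃ b b' : B, b * b' ≠ b' * b)
    (hGcen : (Subring.center G : Set G) = Set.range (algebraMap R G))
    (hBcen : (Subring.center B : Set B) = Set.range (algebraMap R B))
    (h1 : ∀ f : B →ₗ[R] B, (∀ b, f b * b = b * f b) →
            ∃ z ∈ Subring.center B, ∃ η : B →ₗ[R] B,
              (∀ b, η b ∈ Subring.center B) ∧ ∀ b, f b = z * b + η b)
    (h2 : ∀ (r : R) (m : M), r • m = 0 → r = 0 ∨ m = 0)
    (h3 : ∃ (m₀ : M) (b₀ : B), ∀ r s : R,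
            r • h.pM (h.ιM m₀ * h.ιB b₀) + s • m₀ = 0 → r = 0 ∧ s = 0)
    (q : G →ₗ[R] G →ₗ[R] G)
    (hcomm : ∀ x : G, q x x * x = x * q x x) :
    ∃ z ∈ Subring.center G, ∃ μ : G →ₗ[R] G, (∀ x, μ x ∈ Subring.center G) ∧
      ∃ p : G →ₗ[R] G →ₗ[R] G, (∀ x y, p x y ∈ Subring.center G) ∧
        ∀ x : G, q x x = z * x ^ 2 + μ x * x + p x x := by
  classical
  obtain ⟨m₀, b₀, h3⟩ := h3
  have h3' : ∀ r s : R, r • h.mb m₀ b₀ + s • m₀ = 0 → r = 0 ∧ s = 0 := h3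
  obtain ⟨b1, b2, hb12⟩ := hBnc
  have hR : (1 : R) ≠ 0 := fun e => hb12 (by
    have : ∀ b : B, b = 0 := fun b => by rw [← one_smul R b, e, zero_smul]
    rw [this (b1 * b2), this (b2 * b1)])
  have hm₀ : m₀ ≠ 0 := fun e => hR (h3' 0 1 (by simp [e])).2
  have hinj : Function.Injective (algebraMap R B) := by
    intro r s hrs
    have e : (r - s) • m₀ = 0 := by
      rw [← h.mb_alg, map_sub, hrs, sub_self, map_zero]
    rcases h2 _ _ e with e | e
    · exact sub_eq_zero.1 e
    · exact absurd e hm₀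
  have cB' : ∀ b : B, b ∈ Subring.center B → ∃ r, algebraMap R B r = b := fun b hb => by
    have : b ∈ (Subring.center B : Set B) := hb
    rwa [hBcen] at this
  have cB : ∀ b : B, (∀ b', b * b' - b' * b = 0) → ∃ r, algebraMap R B r = b := fun b hb =>
    cB' b (Subring.mem_center_iff.2 fun g => (sub_eq_zero.1 (hb g)).symm)
  have cG : ∀ b : G, (∀ b', GMA.com b b' = 0) → ∃ r, algebraMap R G r = b := fun b hb => by
    have : b ∈ (Subring.center G : Set G) :=
      Subring.mem_center_iff.2 fun g => (sub_eq_zero.1 (hb g)).symm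
    rwa [hGcen] at this
  have cR : ∀ r, algebraMap R G r ∈ Subring.center G := fun r =>
    Subring.mem_center_iff.2 fun g => (Algebra.commutes r g).symm
  have h1' : ∀ f : B →ₗ[R] B, (∀ b, f b * b - b * f b = 0) →
      ∃ z : R, ∃ η : B →ₗ[R] R, ∀ b, f b = z • b + algebraMap R B (η b) := fun f hf => by
    obtain ⟨z, hz, η, hη, e⟩ := h1 f (fun b => sub_eq_zero.1 (hf b))
    obtain ⟨z', rfl⟩ := cB' z hz
    obtain ⟨η', hη'⟩ := GMA.linScal hinj η (fun b => cB' _ (hη b))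
    exact ⟨z', η', fun b => by rw [e, hη', Algebra.smul_def]⟩
  let S : G →ₗ[R] G →ₗ[R] G := q + q.flip
  have hS : ∀ x y, S x y = q x y + q y x := fun x y => by simp [S]
  have I0 : ∀ x, GMA.com (q x x) x = 0 := fun x => sub_eq_zero.2 (hcomm x)
  have II : ∀ x y, GMA.com (q x x) y + GMA.com (S x y) x = 0 := fun x y => by
    have e1 := I0 (x + y)
    have e2 := I0 (x - y)
    have e3 := I0 y
    apply htf
    simp only [hS, GMA.com, map_add, map_sub, LinearMap.add_apply, LinearMap.sub_apply, mul_add,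
      add_mul, mul_sub, sub_mul] at e1 e2 e3 ⊢
    linear_combination (norm := abel) e1 - e2 - e3 - e3
  have III : ∀ x y z, GMA.com (S x y) z + GMA.com (S y z) x + GMA.com (S x z) y = 0 :=
      fun x y z => by
    have e1 := II (x + y) z
    have e2 := II x z
    have e3 := II y z
    simp only [hS, GMA.com, map_add, map_sub, LinearMap.add_apply, LinearMap.sub_apply, mul_add,
      add_mul, mul_sub, sub_mul] at e1 e2 e3 ⊢
    linear_combination (norm := abel) e1 - e2 - e3
  obtain ⟨z, w, d, η, hT⟩ := h.core hinj h2 cB h1' m₀ b₀ hm₀ h3' (fun x => q x x) S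
    (fun x y => by rw [hS, hS, add_comm])
    (fun x y => by simp only [hS, map_add, LinearMap.add_apply]; abel) I0 II III
  have com1 : ∀ g : G, GMA.com g 1 = 0 := fun g => by simp [GMA.com]
  obtain ⟨s, hs⟩ := h.lin h2 cB (S 1)
    (fun x => by
      have := II x 1
      rwa [com1, zero_add, hS, add_comm, ← hS] at this)
    (fun x y => by
      have := III 1 x y
      rw [com1, add_zero] at this
      exact this)
  obtain ⟨t, ht⟩ := cG (q 1 1) (fun y => by
      have := II 1 y
      rwa [com1, add_zero] at this)
  let μ : G →ₗ[R] R := w ∘ₗ h.pM + d ∘ₗ h.pN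
    + η ∘ₗ (h.pB - Algebra.linearMap R B ∘ₗ h.pA) + (s - 2 * z) • h.pA
  have main : ∀ x, ∃ r, algebraMap R G r = q x x - z • (x * x) - μ x • x := fun x => by
    set a := h.pA x with ha
    set b := h.pB x - algebraMap R B a with hb
    set x0 := h.ιM (h.pM x) + h.ιN (h.pN x) + h.ιB b with hx0
    have hx : x = a • (1 : G) + x0 := by
      conv_lhs => rw [h.decomp x]
      rw [hx0, hb, map_sub, ← Algebra.algebraMap_eq_smul_one, h.alg_eq]
      abel
    obtain ⟨r1, hr1⟩ := hT (h.pM x) (h.pN x) b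
    obtain ⟨r2, hr2⟩ := hs (h.pM x) (h.pN x) b
    have hμ : μ x = (w (h.pM x) + d (h.pN x) + η b) + (s - 2 * z) * a := by
      simp [μ, hb, ha]
    rw [← hx0] at hr1 hr2
    rw [hS] at hr2
    set v := w (h.pM x) + d (h.pN x) + η b with hv
    rw [hμ]
    clear_value x0 v a
    refine ⟨r1 + a * r2 + a * a * t + z * (a * a) - s * (a * a) - v * a, ?_⟩
    rw [hx]
    simp only [map_add, map_sub, map_smul, LinearMap.add_apply, LinearMap.smul_apply, ← ht,
      map_mul, hr1, hr2]
    have e : q 1 x0 = algebraMap R G r2 + s • x0 - q x0 1 := by rw [hr2]; abel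
    rw [e, hr2]
    simp only [Algebra.algebraMap_eq_smul_one, mul_add, add_mul, smul_mul_assoc, one_mul, mul_one,
      mul_smul_comm]
    module
  refine ⟨algebraMap R G z, cR z, Algebra.linearMap R G ∘ₗ μ, fun x => cR _,
    (q - z • LinearMap.mul R G - (LinearMap.lsmul R G).comp μ).compr₂
      (Algebra.linearMap R G ∘ₗ h.pA), fun x y => cR _, fun x => ?_⟩
  obtain ⟨r, hr⟩ := main x
  have e : (q - z • LinearMap.mul R G - (LinearMap.lsmul R G).comp μ) x x
      = algebraMap R G r := by
    rw [hr]; simp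
  have e2 : h.pA (algebraMap R G r) = r := by
    rw [h.alg_eq, map_add, h.pA_ιA, h.pA_ιB, add_zero]
  rw [LinearMap.compr₂_apply, e]
  simp only [LinearMap.comp_apply, e2, Algebra.linearMap_apply]
  rw [hr, ← Algebra.smul_def, ← Algebra.smul_def, pow_two]
  abel
end

section
/- Let R be a 2-torsionfree commutative domain and let M_n(R) be the full algebra of n×n matrices over R. Then for every R-bilinear map q : M_n(R) × M_n(R) → M_n(R), every commuting trace T_q : M_n(R) → M_n(R) of q is proper. -/
set_option synthInstance.maxHeartbeats 1000000
set_option maxHeartbeats 1000000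

namespace CT

variable {ι : Type*} [Fintype ι] [DecidableEq ι] {R : Type*} [CommRing R]

/-- scalar matrices, entrywise -/
def Sc (M : Matrix ι ι R) : Prop := (∀ k l, k ≠ l → M k l = 0) ∧ ∀ k l, M k k = M l l

/-- the trilinear identity -/
def Tri (S : Matrix ι ι R →ₗ[R] Matrix ι ι R →ₗ[R] Matrix ι ι R) : Prop :=
  (∀ x y, S x y = S y x) ∧
  ∀ x y w, (S x y * w - w * S x y) + (S y w * x - x * S y w) + (S w x * y - y * S w x) = 0

/-- matrix units -/
abbrev E (R : Type*) [CommRing R] (i j : ι) : Matrix ι ι R := Matrix.single i j 1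

lemma mulE (M : Matrix ι ι R) (k l a b : ι) :
    (M * E R k l) a b = if b = l then M a k else 0 := by
  split_ifs with h
  · subst h; simp [E]
  · simp [E, h]

lemma Emul (M : Matrix ι ι R) (k l a b : ι) :
    (E R k l * M) a b = if a = k then M l b else 0 := by
  split_ifs with h
  · subst h; simp [E]
  · simp [E, h]

lemma Eapp (i j a b : ι) : (E R i j) a b = if i = a ∧ j = b then 1 else 0 := by
  simp [E, Matrix.single_apply]

/-- entry form -/
lemma Tri.entry {S : Matrix ι ι R →ₗ[R] Matrix ι ι R →ₗ[R] Matrix ι ι R} (h : Tri S)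
    (i j k l m n a b : ι) :
    ((if b = n then S (E R i j) (E R k l) a m else 0)
      - (if a = m then S (E R i j) (E R k l) n b else 0))
    + ((if b = j then S (E R k l) (E R m n) a i else 0)
      - (if a = i then S (E R k l) (E R m n) j b else 0))
    + ((if b = l then S (E R m n) (E R i j) a k else 0)
      - (if a = k then S (E R m n) (E R i j) l b else 0)) = 0 := by
  have := congrFun (congrFun (h.2 (E R i j) (E R k l) (E R m n)) a) b
  simpa only [Matrix.add_apply, Matrix.sub_apply, mulE, Emul, Matrix.zero_apply] using this

/-- corrected bilinear map -/
noncomputable def corr (S : Matrix ι ι R →ₗ[R] Matrix ι ι R →ₗ[R] Matrix ι ι R) (z : R)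
    (μ : Matrix ι ι R →ₗ[R] R) : Matrix ι ι R →ₗ[R] Matrix ι ι R →ₗ[R] Matrix ι ι R :=
  LinearMap.mk₂ R (fun x y => S x y - z • (x * y + y * x) - (μ x • y + μ y • x))
    (by intros; simp only [map_add, LinearMap.add_apply, add_mul, mul_add, smul_add, add_smul]; abel)
    (by intros; simp only [map_smul, LinearMap.smul_apply, Matrix.smul_mul, Matrix.mul_smul,
          smul_eq_mul]; module)
    (by intros; simp only [map_add, LinearMap.add_apply, add_mul, mul_add, smul_add, add_smul]; abel)
    (by intros; simp only [map_smul, LinearMap.smul_apply, Matrix.smul_mul, Matrix.mul_smul,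
          smul_eq_mul]; module)

lemma corr_apply (S : Matrix ι ι R →ₗ[R] Matrix ι ι R →ₗ[R] Matrix ι ι R) (z : R)
    (μ : Matrix ι ι R →ₗ[R] R) (x y) :
    corr S z μ x y = S x y - z • (x * y + y * x) - (μ x • y + μ y • x) := rfl

lemma corr_tri {S : Matrix ι ι R →ₗ[R] Matrix ι ι R →ₗ[R] Matrix ι ι R} (h : Tri S) (z : R)
    (μ : Matrix ι ι R →ₗ[R] R) : Tri (corr S z μ) := by
  refine ⟨fun x y => ?_, fun x y w => ?_⟩
  · rw [corr_apply, corr_apply, h.1 x y, add_comm (x * y), add_comm (μ x • y)]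
  · rw [← h.2 x y w]
    simp only [corr_apply, sub_mul, mul_sub, add_mul, mul_add, smul_add, Matrix.smul_mul,
      Matrix.mul_smul, mul_assoc]
    module

variable {S : Matrix ι ι R →ₗ[R] Matrix ι ι R →ₗ[R] Matrix ι ι R}

lemma stageC (htf : ∀ r : R, r + r = 0 → r = 0) (h : Tri S)
    (h1 : ∀ m i j, Sc (S (E R m m) (E R i j))) (i j k l : ι) :
    Sc (S (E R i j) (E R k l)) := by
  have hs : ∀ i j k l, S (E R i j) (E R k l) = S (E R k l) (E R i j) := fun _ _ _ _ => h.1 _ _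
  have od : ∀ i j k l a b, a ≠ b → S (E R i j) (E R k l) a b = 0 := by
    intro i j k l a b hab
    have := h.entry i j k l b b a b
    have e1 := (h1 b k l)
    have e2 := (h1 b i j)
    rw [hs k l b b] at this
    unfold Sc at e1 e2
    grind
  refine ⟨od i j k l, ?_⟩
  by_cases hij : i = j
  · subst hij; exact (h1 i k l).2
  by_cases hkl : k = l
  · subst hkl; rw [hs]; exact (h1 k i j).2
  have key : ∀ i j k l a b, i ≠ j → k ≠ l → a ≠ b → ¬ (a = i ∧ b = j) → ¬ (a = k ∧ b = l) →
      S (E R i j) (E R k l) a a = S (E R i j) (E R k l) b b := by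
    intro i j k l a b hij hkl hab n1 n2
    have := h.entry i j k l a b a b
    have o1 := od k l a b
    have o2 := od a b i j
    grind
  intro a b
  by_cases hab : a = b
  · rw [hab]
  by_cases c1 : ¬ (a = i ∧ b = j) ∧ ¬ (a = k ∧ b = l)
  · exact key i j k l a b hij hkl hab c1.1 c1.2
  by_cases c2 : ¬ (b = i ∧ a = j) ∧ ¬ (b = k ∧ a = l)
  · exact (key i j k l b a hij hkl (Ne.symm hab) c2.1 c2.2).symm
  have c3 : k = j ∧ l = i := by grind
  obtain ⟨rfl, rfl⟩ := c3
  -- S (E i j) (E j i)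
  have t := h.entry l k l k k l l k
  have u := key l k l k k l hij hij (Ne.symm hij) (by grind) (by grind)
  have v := h.entry l k l k k l l k
  have w : S (E R l k) (E R k l) l l = S (E R l k) (E R k l) k k := by
    have e := h.entry l k l k k l l k
    rw [hs k l l k] at e
    simp [hij] at e
    apply sub_eq_zero.1
    apply htf
    grind
  grind

lemma stageB (htf : ∀ r : R, r + r = 0 → r = 0) (h : Tri S)
    (h1 : ∀ i j, Sc (S (E R i i) (E R j j))) :
    ∃ μ : Matrix ι ι R →ₗ[R] R, ∀ m i j, Sc (corr S 0 μ (E R m m) (E R i j)) := by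
  have hs : ∀ i j k l, S (E R i j) (E R k l) = S (E R k l) (E R i j) := fun _ _ _ _ => h.1 _ _
  have od1 : ∀ m i j l, m ≠ l → S (E R m m) (E R i j) m l = 0 ∧ S (E R m m) (E R i j) l m = 0 := by
    intro m i j l hml
    have e1 := h.entry m m m m i j m l
    have e2 := h.entry m m m m i j l m
    have a := h1 m m
    rw [hs i j m m] at e1 e2
    unfold Sc at a
    constructor <;> apply htf <;> grind
  have od : ∀ m i j a b, a ≠ b → S (E R m m) (E R i j) a b = 0 := by
    intro m i j a b hab
    have e := h.entry m m b b i j a b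
    rw [hs i j m m] at e
    have a := h1 m b
    have b := od1 m i j
    unfold Sc at a
    grind
  have key : ∀ m i j k l, i ≠ j → k ≠ l → ¬ (k = i ∧ l = j) →
      S (E R m m) (E R i j) k k - S (E R m m) (E R i j) l l =
        ((if m = k then 1 else 0) - (if m = l then 1 else 0)) * S (E R i j) (E R k l) k l := by
    intro m i j k l hij hkl hn
    have e := h.entry m m i j k l k l
    rw [hs k l m m] at e
    have := od m k l
    grind
  have k1 : ∀ i j, i ≠ j → ∀ m k l, m ≠ k → m ≠ l →
      S (E R m m) (E R i j) k k = S (E R m m) (E R i j) l l := by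
    intro i j hij m k l a b
    by_cases hkl : k = l
    · rw [hkl]
    by_cases hc : k = i ∧ l = j
    · have e2 := key m i j l k hij (Ne.symm hkl) (fun h => hij (by rw [← hc.1, h.2]))
      simp only [a, b, if_false, sub_zero, zero_mul] at e2
      exact (sub_eq_zero.1 e2).symm
    · have e1 := key m i j k l hij hkl hc
      simp only [a, b, if_false, sub_zero, zero_mul] at e1
      exact sub_eq_zero.1 e1
  have k2 : ∀ i j, i ≠ j → ∀ k l, k ≠ l →
      S (E R k k) (E R i j) k k - S (E R k k) (E R i j) l l =
      S (E R l l) (E R i j) l l - S (E R l l) (E R i j) k k := by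
    intro i j hij k l hkl
    have hlk := Ne.symm hkl
    by_cases hc : k = i ∧ l = j
    · have hn : ¬ (l = i ∧ k = j) := fun h => hij (by rw [← hc.1, h.2])
      have e2 := key k i j l k hij hlk hn
      have e4 := key l i j l k hij hlk hn
      simp only [hkl, hlk, if_false, if_true] at e2 e4
      linear_combination -e2 - e4
    · have e2 := key k i j k l hij hkl hc
      have e4 := key l i j k l hij hkl hc
      simp only [hkl, hlk, if_false, if_true] at e2 e4
      linear_combination e2 + e4
  let c : ι → ι → R := fun i j => if i = j then 0 else
    S (E R i i) (E R i j) i i - S (E R i i) (E R i j) j j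
  let μ : Matrix ι ι R →ₗ[R] R := ∑ i, ∑ j, c i j • Matrix.entryLinearMap R R i j
  have hμ : ∀ i j, μ (E R i j) = c i j := by
    intro i j
    simp only [μ, LinearMap.sum_apply, LinearMap.smul_apply, Matrix.entryLinearMap_apply, Eapp]
    rw [Finset.sum_eq_single i, Finset.sum_eq_single j] <;> simp +contextual [eq_comm]
  refine ⟨μ, fun m i j => ?_⟩
  have hc0 : μ (E R m m) = 0 := by rw [hμ]; simp [c]
  have F : corr S 0 μ (E R m m) (E R i j) = S (E R m m) (E R i j) - c i j • E R m m := by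
    rw [corr_apply, hc0, hμ]; simp
  rw [F]
  by_cases hij : i = j
  · subst hij; simpa [c] using h1 m i
  replace k1 := k1 i j hij
  replace k2 := k2 i j hij
  have k3 : ∀ l, m ≠ l →
      S (E R m m) (E R i j) m m - S (E R m m) (E R i j) l l = c i j := by
    intro l hl
    have hc : c i j = S (E R i i) (E R i j) i i - S (E R i i) (E R i j) j j := by simp [c, hij]
    by_cases hm : m = i
    · subst hm
      have := k1 m l j hl hij
      rw [hc, this]
    · have a1 := k2 m i hm
      have a2 := k1 m l i hl hm
      have a3 := k1 i m j (Ne.symm hm) hij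
      rw [hc, a2, a1, a3]
  constructor
  · intro k l hkl
    have := od m i j k l hkl
    have hn : ¬ (m = k ∧ m = l) := fun h => hkl (by rw [← h.1, h.2])
    simp [Matrix.sub_apply, Matrix.smul_apply, Eapp, this, hn]
  · intro k l
    simp only [Matrix.sub_apply, Matrix.smul_apply, Eapp, smul_eq_mul]
    by_cases hk : m = k <;> by_cases hl : m = l
    · rw [← hk, ← hl]
    · have := k3 l hl
      simp only [← hk, hl, and_self, if_true, if_false]
      linear_combination this
    · have := k3 k hk
      simp only [← hl, hk, and_self, if_true, if_false]
      linear_combination -this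
    · have := k1 m k l hk hl
      simp only [hl, hk, and_self, if_false]
      rw [this]

lemma stageA (htf : ∀ r : R, r + r = 0 → r = 0) (h : Tri S)
    (T : Matrix ι ι R → Matrix ι ι R) (hT : ∀ x, S x x = T x + T x)
    (hc : ∀ x, S x x * x = x * S x x) :
    ∃ (z : R) (μ : Matrix ι ι R →ₗ[R] R), ∀ i j, Sc (corr S z μ (E R i i) (E R j j)) := by
  have hs : ∀ i j k l, S (E R i j) (E R k l) = S (E R k l) (E R i j) := fun _ _ _ _ => h.1 _ _
  have dbl : ∀ a b : R, a + a = b + b → a = b := by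
    intro a b hab
    apply sub_eq_zero.1
    apply htf
    grind
  have odi : ∀ i a b, a ≠ b → S (E R i i) (E R i i) a b = 0 := by
    intro i
    have o1 : ∀ l, l ≠ i → S (E R i i) (E R i i) i l = 0 ∧ S (E R i i) (E R i i) l i = 0 := by
      intro l hl
      have e1 := congrFun (congrFun (hc (E R i i)) i) l
      have e2 := congrFun (congrFun (hc (E R i i)) l) i
      rw [mulE, Emul] at e1 e2
      simp only [hl, if_false, if_true] at e1 e2
      exact ⟨e1.symm, e2⟩
    intro a b hab
    have e1 := h.entry i i i i b b a b
    have := o1 a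
    have := o1 b
    grind
  have odj : ∀ i j b, i ≠ b → S (E R i i) (E R j j) i b = 0 ∧ S (E R i i) (E R j j) b i = 0 := by
    intro i j b hb
    have e1 := h.entry i i i i j j i b
    have e2 := h.entry i i i i j j b i
    rw [hs j j i i] at e1 e2
    have := odi i
    constructor <;> apply htf <;> grind
  have od : ∀ i j a b, a ≠ b → S (E R i i) (E R j j) a b = 0 := by
    intro i j a b hab
    by_cases c1 : a = i
    · subst c1; exact (odj _ _ _ hab).1
    by_cases c2 : b = i
    · subst c2; exact (odj _ _ _ (Ne.symm hab)).2
    by_cases c3 : a = j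
    · subst c3; rw [hs]; exact (odj _ _ _ hab).1
    by_cases c4 : b = j
    · subst c4; rw [hs]; exact (odj _ _ _ (Ne.symm hab)).2
    have e1 := h.entry i i j j b b a b
    simpa [c1, c2, c3, c4, hab] using e1
  -- difference formula
  have D : ∀ i j k l, k ≠ l → S (E R i i) (E R j j) k k - S (E R i i) (E R j j) l l =
      ((if i = k then 1 else 0) - (if i = l then 1 else 0)) * S (E R j j) (E R k l) k l +
      ((if j = k then 1 else 0) - (if j = l then 1 else 0)) * S (E R i i) (E R k l) k l := by
    intro i j k l hkl
    have e := h.entry i i j j k l k l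
    rw [hs k l i i] at e
    clear hc hT hs odi odj od
    grind
  have fa : ∀ i j k l, i ≠ k → i ≠ l → j ≠ k → j ≠ l →
      S (E R i i) (E R j j) k k = S (E R i i) (E R j j) l l := by
    intro i j k l _ _ _ _
    by_cases hkl : k = l
    · rw [hkl]
    have := D i j k l hkl
    grind
  have fb : ∀ i k l, i ≠ k → i ≠ l → k ≠ l →
      S (E R i i) (E R k k) k k - S (E R i i) (E R k k) l l =
      S (E R i i) (E R l l) l l - S (E R i i) (E R l l) k k := by
    intro i k l _ _ hkl
    have := D i k k l hkl
    have := D i l k l hkl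
    grind
  have hlam : ∀ m, ∃ a : R, ∀ k, k ≠ m →
      S (E R m m) (E R m m) m m - S (E R m m) (E R m m) k k = a + a := by
    intro m
    by_cases hk : ∃ k, k ≠ m
    · obtain ⟨k0, hk0⟩ := hk
      refine ⟨T (E R m m) m m - T (E R m m) k0 k0, fun k hk => ?_⟩
      rw [fa m m k k0 hk.symm hk0.symm hk.symm hk0.symm, hT]
      simp only [Matrix.add_apply]; ring
    · push Not at hk
      exact ⟨0, fun k hk' => absurd (hk k) hk'⟩
  choose lam hlam using hlam
  have fc : ∀ i j, i ≠ j →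
      S (E R i i) (E R j j) i i - S (E R i i) (E R j j) j j = lam j - lam i := by
    intro i j hij
    have d1 := D i j i j hij
    have d2 := D i i i j hij
    have d3 := D j j i j hij
    have l1 := hlam i j (Ne.symm hij)
    have l2 := hlam j i hij
    have m1 : S (E R i i) (E R i j) i j = lam i := by
      apply dbl
      rw [← l1, d2]; simp [hij, Ne.symm hij]
    have m2 : S (E R j j) (E R i j) i j = lam j := by
      apply dbl
      simp only [hij, Ne.symm hij, if_true, if_false] at d3; linear_combination l2 + d3
    rw [d1, m1, m2]; simp [hij, Ne.symm hij]; ring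
  obtain ⟨z, hz⟩ : ∃ z : R, ∀ i j l, i ≠ j → i ≠ l → j ≠ l →
      lam j - (S (E R i i) (E R j j) i i - S (E R i i) (E R j j) l l) = z := by
    let g : ι → ι → ι → R := fun i j l =>
      lam j - (S (E R i i) (E R j j) i i - S (E R i i) (E R j j) l l)
    have g1 : ∀ i j l, i ≠ j → i ≠ l → j ≠ l → g i j l = g l j i := by
      intro i j l a b c
      have := fb j i l a.symm c b
      simp only [g]
      rw [hs i i j j, hs l l j j, this]
    have g2 : ∀ i j l, i ≠ j → i ≠ l → j ≠ l → g i j l = g j i l := by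
      intro i j l a b c
      have := fc i j a
      simp only [g]
      rw [hs j j i i]
      linear_combination -this
    have g3 : ∀ i j l l', i ≠ j → i ≠ l → j ≠ l → i ≠ l' → j ≠ l' → g i j l = g i j l' := by
      intro i j l l' a b c d e
      simp only [g]
      rw [fa i j l l' b d c e]
    have g4 : ∀ i j l, i ≠ j → i ≠ l → j ≠ l → g i j l = g i l j := by
      intro i j l a b c
      rw [g2 i j l a b c, g1 j i l a.symm c b, g2 l i j b.symm c.symm a]
    have g5 : ∀ i j l j' l', i ≠ j → i ≠ l → j ≠ l → i ≠ j' → i ≠ l' → j' ≠ l' →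
        g i j l = g i j' l' := by
      intro i j l j' l' a b c d e f
      by_cases hl : l' = j
      · subst hl
        rw [g4 i j' l' d e f]
        exact g3 _ _ _ _ a b c d f.symm
      · rw [g3 i j l l' a b c e (Ne.symm hl), g4 i j l' a e (Ne.symm hl),
          g3 i l' j j' e a hl d f.symm, g4 i l' j' e d f.symm]
    by_cases hex : ∃ a b c : ι, a ≠ b ∧ a ≠ c ∧ b ≠ c
    · obtain ⟨a, b, c, hab, hac, hbc⟩ := hex
      refine ⟨g a b c, fun i j l h1 h2 h3 => ?_⟩
      change g i j l = g a b c
      by_cases hia : i = a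
      · subst hia; exact g5 _ _ _ _ _ h1 h2 h3 hab hac hbc
      · have : ∃ e, i ≠ e ∧ a ≠ e := by
          by_cases hib : i = b
          · exact ⟨c, by rw [hib]; exact hbc, hac⟩
          · exact ⟨b, hib, hab⟩
        obtain ⟨e, he1, he2⟩ := this
        rw [g5 i j l a e h1 h2 h3 hia he1 he2, g2 i a e hia he1 he2,
          g5 a i e b c (Ne.symm hia) he2 he1 hab hac hbc]
    · exact ⟨0, fun i j l h1 h2 h3 => absurd ⟨i, j, l, h1, h2, h3⟩ hex⟩
  let μ : Matrix ι ι R →ₗ[R] R := ∑ i, (lam i - z) • Matrix.entryLinearMap R R i i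
  have hμ : ∀ i, μ (E R i i) = lam i - z := by
    intro i
    simp only [μ, LinearMap.sum_apply, LinearMap.smul_apply, Matrix.entryLinearMap_apply, Eapp]
    rw [Finset.sum_eq_single i] <;> simp +contextual [eq_comm]
  refine ⟨z, μ, fun i j => ?_⟩
  by_cases hij : i = j
  · subst hij
    have F : corr S z μ (E R i i) (E R i i) = S (E R i i) (E R i i) - (lam i + lam i) • E R i i := by
      have : E R i i * E R i i = E R i i := by simp [E]
      rw [corr_apply, hμ, this]; module
    rw [F]
    constructor
    · intro k l hkl
      have := od i i k l hkl
      have hn : ¬ (i = k ∧ i = l) := fun h => hkl (by rw [← h.1, h.2])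
      simp [Matrix.sub_apply, Matrix.smul_apply, Eapp, this, hn]
    · have all : ∀ k, (S (E R i i) (E R i i) - (lam i + lam i) • E R i i) k k =
          S (E R i i) (E R i i) i i - (lam i + lam i) := by
        intro k
        simp only [Matrix.sub_apply, Matrix.smul_apply, Eapp, smul_eq_mul]
        by_cases hk : i = k
        · simp only [← hk, and_self, if_true]; ring
        · have := hlam i k (Ne.symm hk)
          simp only [hk, and_self, if_false]
          linear_combination -this
      intro k l
      rw [all, all]
  · have F : corr S z μ (E R i i) (E R j j) = S (E R i i) (E R j j) - (lam i - z) • E R j j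
        - (lam j - z) • E R i i := by
      have e1 : E R i i * E R j j = 0 := by simp [E, hij]
      have e2 : E R j j * E R i i = 0 := by simp [E, Ne.symm hij]
      rw [corr_apply, hμ, hμ, e1, e2]; module
    rw [F]
    constructor
    · intro k l hkl
      have := od i j k l hkl
      have hn : ¬ (i = k ∧ i = l) := fun h => hkl (by rw [← h.1, h.2])
      have hn' : ¬ (j = k ∧ j = l) := fun h => hkl (by rw [← h.1, h.2])
      simp [Matrix.sub_apply, Matrix.smul_apply, Eapp, this, hn, hn']
    · have b1 := fc i j hij
      have b2 : ∀ l, i ≠ l → j ≠ l →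
          S (E R i i) (E R j j) i i - S (E R i i) (E R j j) l l = lam j - z := by
        intro l x y
        have := hz i j l hij x y
        linear_combination -this
      have all : ∀ k, (S (E R i i) (E R j j) - (lam i - z) • E R j j - (lam j - z) • E R i i) k k =
          S (E R i i) (E R j j) i i - (lam j - z) := by
        intro k
        simp only [Matrix.sub_apply, Matrix.smul_apply, Eapp, smul_eq_mul]
        by_cases hk : i = k
        · simp only [← hk, Ne.symm hij, and_self, if_true, if_false]; ring
        · by_cases hk' : j = k
          · simp only [← hk', hij, and_self, if_true, if_false]
            linear_combination -b1
          · have := b2 k hk hk'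
            simp only [hk, hk', and_self, if_false]
            linear_combination -this
      intro k l
      rw [all, all]

lemma Sc.central {M : Matrix ι ι R} (h : Sc M) : M ∈ Subring.center (Matrix ι ι R) := by
  rw [Subring.mem_center_iff]
  intro g
  by_cases hn : Nonempty ι
  · obtain ⟨i⟩ := hn
    have : M = M i i • (1 : Matrix ι ι R) := by
      ext a b
      by_cases hab : a = b
      · subst hab; simp [h.2 a i]
      · simp [h.1 a b hab, hab]
    rw [this]; simp
  · ext a; exact absurd ⟨a⟩ hn

lemma Sc_all (h : ∀ i j k l, Sc (S (E R i j) (E R k l))) (x y : Matrix ι ι R) : Sc (S x y) := by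
  have gen : ∀ φ : Matrix ι ι R →ₗ[R] R, (∀ i j k l, φ (S (E R i j) (E R k l)) = 0) →
      φ (S x y) = 0 := by
    intro φ hφ
    have hx : ∀ x : Matrix ι ι R, x = ∑ i, ∑ j, x i j • E R i j := by
      intro x
      conv_lhs => rw [Matrix.matrix_eq_sum_single x]
      simp [E, Matrix.smul_single]
    rw [hx x, hx y]
    simp only [map_sum, LinearMap.sum_apply, map_smul, LinearMap.smul_apply, hφ]
    simp
  constructor
  · intro k l hkl
    exact gen (Matrix.entryLinearMap R R k l) (fun a b c d => (h a b c d).1 k l hkl)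
  · intro k l
    have := gen (Matrix.entryLinearMap R R k k - Matrix.entryLinearMap R R l l)
      (fun a b c d => sub_eq_zero.2 ((h a b c d).2 k l))
    exact sub_eq_zero.1 this

end CT

open CT in
/-- **Corollary 3.18.**  Let `R` be a `2`-torsionfree commutative domain and
`M_n(R)` the full algebra of `n × n` matrices over `R`.  Then for every
`R`-bilinear map `q : M_n(R) × M_n(R) → M_n(R)`, every commuting trace `T_q`
of `q` is proper. -/
theorem stmt9 (n : ℕ) (R : Type*) [CommRing R] [IsDomain R]
    (htf : ∀ r : R, r + r = 0 → r = 0)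
    (q : Matrix (Fin n) (Fin n) R →ₗ[R] Matrix (Fin n) (Fin n) R →ₗ[R]
          Matrix (Fin n) (Fin n) R)
    (hcomm : ∀ x : Matrix (Fin n) (Fin n) R, q x x * x = x * q x x) :
    ∃ z ∈ Subring.center (Matrix (Fin n) (Fin n) R),
      ∃ μ : Matrix (Fin n) (Fin n) R →ₗ[R] Matrix (Fin n) (Fin n) R,
        (∀ x, μ x ∈ Subring.center (Matrix (Fin n) (Fin n) R)) ∧
        ∃ p : Matrix (Fin n) (Fin n) R →ₗ[R] Matrix (Fin n) (Fin n) R →ₗ[R]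
              Matrix (Fin n) (Fin n) R,
          (∀ x y, p x y ∈ Subring.center (Matrix (Fin n) (Fin n) R)) ∧
          ∀ x : Matrix (Fin n) (Fin n) R, q x x = z * x ^ 2 + μ x * x + p x x := by
  have lin : ∀ x y, q x x * y - y * q x x + ((q x y + q y x) * x - x * (q x y + q y x)) = 0 := by
    intro x y
    have h1 := hcomm (x + y)
    have h2 := hcomm (x - y)
    have h3 := hcomm y
    have h4 := hcomm x
    simp only [map_add, map_sub, LinearMap.add_apply, LinearMap.sub_apply, add_mul, mul_add,
      sub_mul, mul_sub] at h1 h2 ⊢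
    ext a b
    apply htf
    have h1' := congrFun (congrFun h1 a) b
    have h2' := congrFun (congrFun h2 a) b
    have h3' := congrFun (congrFun h3 a) b
    simp only [Matrix.add_apply, Matrix.sub_apply, Matrix.zero_apply] at h1' h2' h3' ⊢
    linear_combination h1' - h2' - 2 * h3'
  let S := q + q.flip
  have hS : ∀ x y, S x y = q x y + q y x := fun x y => rfl
  have hT : ∀ x, S x x = q x x + q x x := fun x => rfl
  have tri : Tri S := by
    refine ⟨fun x y => by rw [hS, hS, add_comm], fun x y w => ?_⟩
    have h1 := lin (x + y) w
    have h2 := lin x w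
    have h3 := lin y w
    simp only [hS, map_add, LinearMap.add_apply, add_mul, mul_add] at h1 h2 h3 ⊢
    linear_combination (norm := abel) h1 - h2 - h3
  obtain ⟨z, μ, hA⟩ := stageA htf tri (fun x => q x x) hT
    (fun x => by rw [hT, add_mul, mul_add, hcomm])
  obtain ⟨μ', hB⟩ := stageB htf (corr_tri tri z μ) hA
  have hC := Sc_all (stageC htf (corr_tri (corr_tri tri z μ) 0 μ') hB)
  have fin : ∀ x, Sc (q x x - z • x ^ 2 - (μ + μ') x • x) := by
    intro x
    have e : corr (corr S z μ) 0 μ' x x = (q x x - z • x ^ 2 - (μ + μ') x • x) +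
        (q x x - z • x ^ 2 - (μ + μ') x • x) := by
      rw [corr_apply, corr_apply, hT, LinearMap.add_apply, pow_two]; module
    have h := hC x x
    rw [e] at h
    constructor
    · intro k l hkl
      exact htf _ (h.1 k l hkl)
    · intro k l
      have := h.2 k l
      simp only [Matrix.add_apply] at this
      apply sub_eq_zero.1
      apply htf
      linear_combination this
  have cen : ∀ r : R, r • (1 : Matrix (Fin n) (Fin n) R) ∈
      Subring.center (Matrix (Fin n) (Fin n) R) := by
    intro r; rw [Subring.mem_center_iff]; intro g; simp
  rcases n with _ | n
  · refine ⟨0, Subring.zero_mem _, 0, fun x => Subring.zero_mem _, 0, fun x y => Subring.zero_mem _,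
      fun x => ?_⟩
    ext a; exact a.elim0
  let P : Matrix (Fin (n+1)) (Fin (n+1)) R →ₗ[R] Matrix (Fin (n+1)) (Fin (n+1)) R →ₗ[R]
      Matrix (Fin (n+1)) (Fin (n+1)) R := LinearMap.mk₂ R
    (fun x y => (q x y 0 0 - z * (x * y) 0 0 - (μ + μ') x * y 0 0) • 1)
    (by intros; simp only [map_add, LinearMap.add_apply, add_mul, Matrix.add_apply]; module)
    (by intros; simp only [map_smul, LinearMap.smul_apply, Matrix.smul_mul, Matrix.smul_apply,
          smul_eq_mul]; module)
    (by intros; simp only [map_add, mul_add, Matrix.add_apply]; module)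
    (by intros; simp only [map_smul, Matrix.mul_smul, Matrix.smul_apply,
          smul_eq_mul]; module)
  refine ⟨z • 1, cen z, (μ + μ').smulRight 1, fun x => cen _, P, fun x y => cen _, fun x => ?_⟩
  have hP : P x x = (q x x 0 0 - z * (x * x) 0 0 - (μ + μ') x * x 0 0) • 1 := rfl
  have hf := fin x
  rw [hP, LinearMap.smulRight_apply]
  generalize (μ + μ') x = m at hf ⊢
  ext a b
  rw [pow_two] at hf ⊢
  simp only [Matrix.add_apply, Matrix.smul_mul, one_mul, Matrix.smul_apply, smul_eq_mul]
  by_cases hab : a = b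
  · subst hab
    have := hf.2 a 0
    simp only [Matrix.sub_apply, Matrix.smul_apply, smul_eq_mul] at this
    rw [Matrix.one_apply_eq]
    linear_combination this
  · have := hf.1 a b hab
    simp only [Matrix.sub_apply, Matrix.smul_apply, smul_eq_mul] at this
    rw [Matrix.one_apply_ne hab]
    linear_combination this
end

section
/- Let X be a Banach space over the real or complex field F and let B(X) be the algebra of all bounded linear operators on X. Then for every F-bilinear map q : B(X) × B(X) → B(X), every commuting trace T_q : B(X) → B(X) of q is proper. -/
section aux
variable {F X : Type*} [RCLike F] [NormedAddCommGroup X] [NormedSpace F X]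

lemma hb1 {v : X} (hv : v ≠ 0) : ∃ f : X →L[F] F, f v = 1 :=
  SeparatingDual.exists_eq_one hv

lemma hbsep {x y : X} (h : ∀ f : X →L[F] F, f x = f y) : x = y := by
  by_contra hne
  obtain ⟨f, hf⟩ := hb1 (F := F) (sub_ne_zero.mpr hne)
  rw [map_sub, h f, sub_self] at hf
  exact zero_ne_one hf

lemma hb2 {v y : X} (h : ∀ c : F, y ≠ c • v) : ∃ g : X →L[F] F, g v = 0 ∧ g y = 1 := by
  by_cases hv : v = 0
  · have hy : y ≠ 0 := by simpa using h 0
    obtain ⟨f, hf⟩ := hb1 (F := F) hy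
    exact ⟨f, by simp [hv], hf⟩
  · obtain ⟨k, hk⟩ := hb1 (F := F) hv
    obtain ⟨l, hl⟩ := hb1 (F := F) (sub_ne_zero.mpr (h (k y)))
    refine ⟨l - l v • k, by simp [hk], ?_⟩
    simp at hl ⊢
    linear_combination hl

/-- rank one operators -/
noncomputable def rk : X →ₗ[F] (X →L[F] F) →ₗ[F] (X →L[F] X) :=
  LinearMap.mk₂ F (fun v f => f.smulRight v)
    (by intros; ext; simp) (by intro c v f; ext u; simpa using smul_comm (f u) c v)
    (by intros; ext; simp [add_smul]) (by intros; ext; simp [mul_smul])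

@[simp] lemma rk_apply (v : X) (f : X →L[F] F) (u : X) : rk v f u = f u • v := by
  simp [rk]

/-- proportional linear families have a constant factor -/
lemma L0 {E I : Type*} [AddCommGroup E] [Module F E] (B i : E → I → F)
    (hB : ∀ v w t, B (v + w) t = B v t + B w t) (hBs : ∀ (c : F) v t, B (c • v) t = c * B v t)
    (hi : ∀ v w t, i (v + w) t = i v t + i w t) (his : ∀ (c : F) v t, i (c • v) t = c * i v t)
    (h : ∀ v, ∃ c : F, ∀ t, B v t = c * i v t) : ∃ c : F, ∀ v t, B v t = c * i v t := by
  by_cases h0 : ∀ v t, i v t = 0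
  · refine ⟨0, fun v t => ?_⟩
    obtain ⟨c, hc⟩ := h v
    rw [hc, h0]; simp
  · push Not at h0
    obtain ⟨v0, t0, ht0⟩ := h0
    obtain ⟨c, hc⟩ := h v0
    refine ⟨c, fun w t => ?_⟩
    obtain ⟨d, hd⟩ := h w
    obtain ⟨e, he⟩ := h (v0 + w)
    have key : ∀ t, (c - e) * i v0 t = (e - d) * i w t := by
      intro t
      have := he t
      rw [hB, hi, hc, hd] at this
      linear_combination this
    by_cases hed : e = d
    · have := key t0
      rw [hed, sub_self, zero_mul] at this
      have hcd : c = d := by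
        rcases mul_eq_zero.mp this with h1 | h1
        · exact sub_eq_zero.mp h1
        · exact absurd h1 ht0
      rw [hd, hcd]
    · have hed' : e - d ≠ 0 := sub_ne_zero.mpr hed
      set s := (c - e) / (e - d) with hs
      have hw : ∀ t, i w t = s * i v0 t := by
        intro t
        rw [hs]; field_simp
        linear_combination -(key t)
      obtain ⟨k, hk⟩ := h (w + (-s) • v0)
      have h1 := hk t
      rw [hB, hi, hBs, his, hc, hw] at h1
      rw [hw]
      linear_combination h1

lemma L1 {E Y : Type*} [AddCommGroup E] [Module F E] [AddCommGroup Y] [Module F Y]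
    (B : E →ₗ[F] E →ₗ[F] Y) (i : E →ₗ[F] Y) (hi : ∀ v, i v = 0 → v = 0) (c : E → F)
    (c0 : c 0 = 0) (h : ∀ v, B v v = c v • i v) :
    (∀ v w, c (v + w) = c v + c w) ∧ ∀ (t : F) v, c (t • v) = t * c v := by
  have hs : ∀ (t : F) v, c (t • v) = t * c v := by
    intro t v
    by_cases hv : v = 0
    · simp [hv, c0]
    by_cases ht : t = 0
    · simp [ht, c0]
    have h1 := h (t • v)
    simp only [map_smul, LinearMap.smul_apply, h v, smul_smul] at h1
    have hiv : i v ≠ 0 := fun e => hv (hi v e)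
    have h2 := smul_left_injective F hiv h1
    have h3 : t * (c (t • v) - t * c v) = 0 := by linear_combination -h2
    rcases mul_eq_zero.mp h3 with h4 | h4
    · exact absurd h4 ht
    · exact sub_eq_zero.mp h4
  refine ⟨fun v w => ?_, hs⟩
  by_cases hv : v = 0
  · simp [hv, c0]
  by_cases hd : ∃ s : F, w = s • v
  · obtain ⟨s, rfl⟩ := hd
    have : v + s • v = (1 + s) • v := by module
    rw [this, hs, hs]; ring
  · push Not at hd
    have h1 := h (v + w)
    have h2 := h (v - w)
    simp only [map_add, map_sub, LinearMap.add_apply, LinearMap.sub_apply, h v, h w] at h1 h2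
    set p := c (v + w)
    set m := c (v - w)
    have h3 : i ((p + m - 2 * c v) • v + (p - m - 2 * c w) • w) = 0 := by
      simp only [map_add, map_smul]
      linear_combination (norm := module) -h1 - h2
    have h4 := hi _ h3
    have h5 : p - m - 2 * c w = 0 := by
      by_contra hne
      apply hd (-(p - m - 2 * c w)⁻¹ * (p + m - 2 * c v))
      have : (p - m - 2 * c w)⁻¹ • ((p + m - 2 * c v) • v + (p - m - 2 * c w) • w) = 0 := by
        rw [h4, smul_zero]
      rw [smul_add, smul_smul, smul_smul, inv_mul_cancel₀ hne, one_smul] at this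
      rw [neg_mul, neg_smul]
      exact eq_neg_of_add_eq_zero_right this
    rw [h5, zero_smul, add_zero] at h4
    have h6 : p + m - 2 * c v = 0 := (smul_eq_zero.mp h4).resolve_right hv
    linear_combination (1/2 : F) * h5 + (1/2 : F) * h6

/-- there are two independent vectors -/
def Big (F X : Type*) [RCLike F] [NormedAddCommGroup X] [NormedSpace F X] : Prop :=
  ∃ v w : X, v ≠ 0 ∧ ∀ c : F, w ≠ c • v

lemma big_out (hX : Big F X) (v : X) : ∃ w : X, ∀ c : F, w ≠ c • v := by
  obtain ⟨a, b, ha, hb⟩ := hX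
  by_contra hcon
  push Not at hcon
  obtain ⟨c, hc⟩ := hcon a
  obtain ⟨d, hd⟩ := hcon b
  have hc0 : c ≠ 0 := by rintro rfl; exact ha (by simpa using hc)
  apply hb (d * c⁻¹)
  rw [hc, hd, smul_smul, mul_assoc, inv_mul_cancel₀ hc0, mul_one]

lemma big_ker (hX : Big F X) (f : X →L[F] F) : ∃ u : X, u ≠ 0 ∧ f u = 0 := by
  obtain ⟨a, b, ha, hb⟩ := hX
  by_cases h : f a = 0
  · exact ⟨a, ha, h⟩
  · refine ⟨b - (f b / f a) • a, sub_ne_zero.mpr (hb _), ?_⟩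
    simp; field_simp; ring

lemma scalar_of (D : X →L[F] X) (h : ∀ (g : X →L[F] F) u, g u = 0 → g (D u) = 0) :
    ∃ c : F, D = c • 1 := by
  obtain ⟨c, hc⟩ := L0 (F := F) (fun (v : X) (t : X →L[F] F) => t (D v)) (fun v t => t v)
    (by simp) (by simp) (by simp) (by simp) (by
      intro v
      by_contra hcon
      have : ∀ c : F, D v ≠ c • v := by
        intro c hc
        exact hcon ⟨c, fun t => by rw [hc]; simp⟩
      obtain ⟨g, g1, g2⟩ := hb2 this
      rw [h g v g1] at g2
      exact zero_ne_one g2)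
  refine ⟨c, ?_⟩
  ext v
  apply hbsep (F := F)
  intro t
  simpa using hc v t

lemma scalar_of_comm (D : X →L[F] X) (h : ∀ v f, D * rk v f = rk v f * D) :
    ∃ c : F, D = c • 1 := by
  apply scalar_of
  intro g u hg
  by_cases hu : u = 0
  · simp [hu]
  obtain ⟨f, hf⟩ := hb1 (F := F) hu
  have := congrArg g (congrArg (fun T : X →L[F] X => T u) (h u f))
  simpa [hf, hg] using this

lemma rk_scalar (hX : Big F X) {f : X →L[F] F} (hf : f ≠ 0) {v : X} {c : F}
    (h : rk v f = c • (1 : X →L[F] X)) : v = 0 := by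
  obtain ⟨u, hu, hfu⟩ := big_ker hX f
  have h1 := congrArg (fun T : X →L[F] X => T u) h
  simp only [rk_apply, hfu, zero_smul] at h1
  have h2 : c • u = 0 := by simpa using h1.symm
  have h3 := (smul_eq_zero.mp h2).resolve_right hu
  subst h3
  obtain ⟨u, hu⟩ : ∃ u, f u ≠ 0 := by
    by_contra hcon; push Not at hcon; exact hf (by ext; simp [hcon])
  have h1 := congrArg (fun T : X →L[F] X => T u) h
  simpa [hu] using h1

lemma exists_one {f : X →L[F] F} (hf : f ≠ 0) : ∃ u, f u = 1 := by
  obtain ⟨u, hu⟩ : ∃ u, f u ≠ 0 := by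
    by_contra hcon; push Not at hcon; exact hf (by ext; simp [hcon])
  exact ⟨(f u)⁻¹ • u, by simp [hu]⟩

lemma lemR (hX : Big F X) (v : X) (f : X →L[F] F) (hf : f ≠ 0) (D : X →L[F] X)
    (h : ∀ s k, ∃ p : X →L[F] X, D * rk s k - rk s k * D = rk v f * p - p * rk v f) :
    ∃ l c : F, D = l • rk v f + c • 1 := by
  have key : ∀ (g : X →L[F] F) (u : X), g v = 0 → f u = 0 → ∀ (s : X) (k : X →L[F] F),
      g (D s) * k u = g s * k (D u) := by
    intro g u hg hu s k
    obtain ⟨p, hp⟩ := h s k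
    have := congrArg g (congrArg (fun T : X →L[F] X => T u) hp)
    simp [hg, hu] at this
    linear_combination this
  obtain ⟨s0, hs0⟩ := big_out hX v
  obtain ⟨g0, hg0, hg0s⟩ := hb2 hs0
  set c := g0 (D s0) with hc
  have hker : ∀ u, f u = 0 → D u = c • u := by
    intro u hu
    apply hbsep (F := F)
    intro k
    have := key g0 u hg0 hu s0 k
    rw [hg0s, one_mul] at this
    simp [← this, hc]
  obtain ⟨u1, hu1⟩ := exists_one hf
  have hran : ∃ l : F, D u1 - c • u1 = l • v := by
    by_contra hcon
    push Not at hcon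
    obtain ⟨g, hg, hg1⟩ := hb2 hcon
    obtain ⟨u, hu, hfu⟩ := big_ker hX f
    obtain ⟨k, hk⟩ := hb1 (F := F) hu
    have := key g u hg hfu u1 k
    rw [hker u hfu, map_smul, hk] at this
    simp at hg1 this
    rw [this] at hg1
    apply zero_ne_one (α := F)
    rw [← hg1]; ring
  obtain ⟨l, hl⟩ := hran
  refine ⟨l, c, ?_⟩
  ext x
  have h1 := hker (x - f x • u1) (by simp [hu1])
  have h2 : D u1 = l • v + c • u1 := by rw [← hl]; abel
  rw [map_sub, map_smul, h2] at h1
  simp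
  linear_combination (norm := module) h1

lemma lemPhi (G : X →ₗ[F] (X →L[F] F) →ₗ[F] (X →L[F] X))
    (hG : ∀ v f, G v f * rk v f = rk v f * G v f) :
    ∃ φ : X →ₗ[F] (X →L[F] F) →ₗ[F] F, ∀ v f, G v f v = φ v f • v ∧
      ∀ u, f (G v f u) = φ v f * f u := by
  have h : ∀ (v : X) (f : X →L[F] F), ∃ c : F, (v = 0 ∨ f = 0 → c = 0) ∧ G v f v = c • v ∧
      ∀ u, f (G v f u) = c * f u := by
    intro v f
    by_cases hv : v = 0
    · exact ⟨0, by simp, by simp [hv], by simp [hv]⟩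
    by_cases hf : f = 0
    · exact ⟨0, by simp, by simp [hf], by simp [hf]⟩
    obtain ⟨u1, hu1⟩ := exists_one hf
    have key : ∀ u, f u • G v f v = f (G v f u) • v := by
      intro u
      have := congrArg (fun T : X →L[F] X => T u) (hG v f)
      simpa using this
    have k1 := key u1
    rw [hu1, one_smul] at k1
    refine ⟨f (G v f u1), by simp [hv, hf], k1, fun u => ?_⟩
    have := key u
    rw [k1, smul_smul] at this
    rw [← smul_left_injective F hv this]; ring
  choose φ h0 h1 h2 using h
  have hv : ∀ f, (∀ v w, φ (v + w) f = φ v f + φ w f) ∧ ∀ (t : F) v, φ (t • v) f = t * φ v f := by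
    intro f
    refine L1 (LinearMap.mk₂ F (fun v w : X => G v f w) (by simp) (by simp) (by simp) (by simp))
      LinearMap.id (by simp) (fun v => φ v f) (h0 0 f (by simp)) ?_
    intro v
    simpa using h1 v f
  have hf : ∀ v, (∀ f g, φ v (f + g) = φ v f + φ v g) ∧ ∀ (t : F) f, φ v (t • f) = t * φ v f := by
    intro v
    refine L1 (LinearMap.mk₂ F (fun f g : X →L[F] F => g ∘L G v f) (by intros; ext; simp)
      (by intros; ext; simp) (by intros; ext; simp) (by intros; ext; simp))
      LinearMap.id (by simp) (fun f => φ v f) (h0 v 0 (by simp)) ?_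
    intro f
    ext u
    simpa using h2 v f u
  exact ⟨LinearMap.mk₂ F φ (fun v w f => (hv f).1 v w) (fun t v f => (hv f).2 t v)
    (fun v f g => (hf v).1 f g) (fun t v f => (hf _).2 _ _), fun v f => ⟨h1 v f, h2 v f⟩⟩

lemma quot_zero {a : X →L[F] X} :
    (Submodule.span F {(1 : X →L[F] X)}).mkQ a = 0 ↔ ∃ c : F, a = c • 1 := by
  rw [Submodule.mkQ_apply, Submodule.Quotient.mk_eq_zero, Submodule.mem_span_singleton]
  constructor
  · rintro ⟨c, rfl⟩; exact ⟨c, rfl⟩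
  · rintro ⟨c, rfl⟩; exact ⟨c, rfl⟩

lemma lemLam (hX : Big F X) (S : (X →L[F] X) →ₗ[F] (X →L[F] X) →ₗ[F] (X →L[F] X))
    (h : ∀ v f, ∃ l c : F, S (rk v f) (rk v f) = l • rk v f + c • 1) :
    ∃ l : X →ₗ[F] (X →L[F] F) →ₗ[F] F, ∀ v f, ∃ c : F,
      S (rk v f) (rk v f) = l v f • rk v f + c • 1 := by
  have h' : ∀ (v : X) (f : X →L[F] F), ∃ l : F, (v = 0 ∨ f = 0 → l = 0) ∧ ∃ c : F,
      S (rk v f) (rk v f) = l • rk v f + c • 1 := by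
    intro v f
    by_cases hv : v = 0
    · exact ⟨0, by simp, 0, by simp [hv]⟩
    by_cases hf : f = 0
    · exact ⟨0, by simp, 0, by simp [hf]⟩
    obtain ⟨l, c, hl⟩ := h v f
    exact ⟨l, by simp [hv, hf], c, hl⟩
  choose l h0 c hc using h'
  set π := (Submodule.span F {(1 : X →L[F] X)}).mkQ with hπ
  have hone : ∀ c : F, π (c • 1) = 0 := fun c => quot_zero.mpr ⟨c, rfl⟩
  have hv : ∀ f, (∀ v w, l (v + w) f = l v f + l w f) ∧ ∀ (t : F) v, l (t • v) f = t * l v f := by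
    intro f
    by_cases hf : f = 0
    · have : ∀ v, l v f = 0 := fun v => h0 v f (by simp [hf])
      simp [this]
    refine L1 (LinearMap.mk₂ F (fun v w : X => π (S (rk v f) (rk w f))) (by simp) (by simp)
      (by simp) (by simp))
      (π ∘ₗ rk.flip f) ?_ (fun v => l v f) (h0 0 f (by simp)) ?_
    · intro v hv
      obtain ⟨c, hc⟩ := quot_zero.mp hv
      exact rk_scalar hX hf hc
    · intro v
      simp only [LinearMap.mk₂_apply, hc, map_add, hone, add_zero, map_smul]
      rfl
  have hf : ∀ v, (∀ f g, l v (f + g) = l v f + l v g) ∧ ∀ (t : F) f, l v (t • f) = t * l v f := by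
    intro v
    by_cases hv : v = 0
    · have : ∀ f, l v f = 0 := fun f => h0 v f (by simp [hv])
      simp [this]
    refine L1 (LinearMap.mk₂ F (fun f g : X →L[F] F => π (S (rk v f) (rk v g))) (by simp) (by simp)
      (by simp) (by simp))
      (π ∘ₗ rk v) ?_ (fun f => l v f) (h0 v 0 (by simp)) ?_
    · intro f hf
      obtain ⟨c, hc⟩ := quot_zero.mp hf
      by_contra hne
      exact hv (rk_scalar hX hne hc)
    · intro f
      simp only [LinearMap.mk₂_apply, hc, map_add, hone, add_zero, map_smul]
      rfl
  exact ⟨LinearMap.mk₂ F l (fun v w f => (hv f).1 v w) (fun t v f => (hv f).2 t v)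
    (fun v f g => (hf v).1 f g) (fun t v f => (hf _).2 _ _), fun v f => ⟨c v f, hc v f⟩⟩

/-- 3 by 3 determinant -/
def dt (v1 v2 v3 : X) (f1 f2 f3 : X →L[F] F) : F :=
  f1 v1 * (f2 v2 * f3 v3 - f2 v3 * f3 v2) - f1 v2 * (f2 v1 * f3 v3 - f2 v3 * f3 v1)
    + f1 v3 * (f2 v1 * f3 v2 - f2 v2 * f3 v1)

lemma dual_vec (f1 f2 f3 : X →L[F] F) (h : ∀ a b : F, f1 ≠ a • f2 + b • f3) :
    ∃ e, f1 e = 1 ∧ f2 e = 0 ∧ f3 e = 0 := by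
  by_contra hcon
  have hk : ∀ e, f2 e = 0 → f3 e = 0 → f1 e = 0 := by
    intro e h2 h3
    by_contra h1
    exact hcon ⟨(f1 e)⁻¹ • e, by simp [h1], by simp [h2], by simp [h3]⟩
  have := mem_span_of_iInf_ker_le_ker (ι := Fin 2) (L := ![f2.toLinearMap, f3.toLinearMap])
    (K := f1.toLinearMap) (by
      intro e he
      simp [Submodule.mem_iInf, Fin.forall_fin_two] at he ⊢
      exact hk e he.1 he.2)
  rw [Matrix.range_cons, Matrix.range_cons, Matrix.range_empty, Set.union_empty,
    Set.singleton_union, Submodule.mem_span_pair] at this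
  obtain ⟨a, b, hab⟩ := this
  apply h a b
  ext u
  have := congrArg (fun T : X →ₗ[F] F => T u) hab
  simpa using this.symm

lemma lemM (M : X → X → X → (X →L[F] F) → (X →L[F] F) → (X →L[F] F) → F)
    (a1 : ∀ v1 v2 v3 f f' f2 f3, M v1 v2 v3 (f + f') f2 f3 = M v1 v2 v3 f f2 f3 + M v1 v2 v3 f' f2 f3)
    (s1 : ∀ v1 v2 v3 (c : F) f f2 f3, M v1 v2 v3 (c • f) f2 f3 = c * M v1 v2 v3 f f2 f3)
    (a2 : ∀ v1 v2 v3 f f' f1 f3, M v1 v2 v3 f1 (f + f') f3 = M v1 v2 v3 f1 f f3 + M v1 v2 v3 f1 f' f3)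
    (s2 : ∀ v1 v2 v3 (c : F) f f1 f3, M v1 v2 v3 f1 (c • f) f3 = c * M v1 v2 v3 f1 f f3)
    (a3 : ∀ v1 v2 v3 f f' f1 f2, M v1 v2 v3 f1 f2 (f + f') = M v1 v2 v3 f1 f2 f + M v1 v2 v3 f1 f2 f')
    (s3 : ∀ v1 v2 v3 (c : F) f f1 f2, M v1 v2 v3 f1 f2 (c • f) = c * M v1 v2 v3 f1 f2 f)
    (k13 : ∀ v1 v2 v3 f1 f2 f3, M v1 v2 v3 f1 f2 f3 = - M v3 v2 v1 f1 f2 f3)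
    (k23 : ∀ v1 v2 v3 f1 f2 f3, M v1 v2 v3 f1 f2 f3 = - M v1 v3 v2 f1 f2 f3)
    (z12 : ∀ v1 v2 v3 f g, M v1 v2 v3 f f g = 0)
    (z13 : ∀ v1 v2 v3 f g, M v1 v2 v3 f g f = 0)
    (z23 : ∀ v1 v2 v3 f g, M v1 v2 v3 g f f = 0)
    (hI : ∀ v0 f0 v1 v2 v3 f1 f2 f3,
      f1 v0 * M v1 v2 v3 f0 f2 f3 + f2 v0 * M v1 v2 v3 f1 f0 f3 + f3 v0 * M v1 v2 v3 f1 f2 f0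
      = f0 v1 * M v0 v2 v3 f1 f2 f3 + f0 v2 * M v1 v0 v3 f1 f2 f3
        + f0 v3 * M v1 v2 v0 f1 f2 f3) :
    ∃ κ : F, ∀ v1 v2 v3 f1 f2 f3, M v1 v2 v3 f1 f2 f3 = κ * dt v1 v2 v3 f1 f2 f3 := by
  have hex : ∀ f3 f2 f1, ∃ c : F, ∀ v1 v2 v3, M v1 v2 v3 f1 f2 f3 = c * dt v1 v2 v3 f1 f2 f3 := by
    intro f3 f2 f1
    by_cases h1 : ∃ a b : F, f1 = a • f2 + b • f3
    · obtain ⟨a, b, rfl⟩ := h1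
      refine ⟨0, fun v1 v2 v3 => ?_⟩
      rw [a1, s1, s1, z12, z13]; simp
    by_cases h2 : ∃ a b : F, f2 = a • f1 + b • f3
    · obtain ⟨a, b, rfl⟩ := h2
      refine ⟨0, fun v1 v2 v3 => ?_⟩
      rw [a2, s2, s2, z12, z23]; simp
    by_cases h3 : ∃ a b : F, f3 = a • f1 + b • f2
    · obtain ⟨a, b, rfl⟩ := h3
      refine ⟨0, fun v1 v2 v3 => ?_⟩
      rw [a3, s3, s3, z13, z23]; simp
    push Not at h1 h2 h3
    obtain ⟨e1, p11, p12, p13⟩ := dual_vec f1 f2 f3 h1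
    obtain ⟨e2, p22, p21, p23⟩ := dual_vec f2 f1 f3 h2
    obtain ⟨e3, p33, p31, p32⟩ := dual_vec f3 f1 f2 h3
    have q1 : ∀ v1 v2 v3, M v1 v2 v3 f1 f2 f3 = f1 v1 * M e1 v2 v3 f1 f2 f3
        - f1 v2 * M e1 v1 v3 f1 f2 f3 + f1 v3 * M e1 v1 v2 f1 f2 f3 := by
      intro v1 v2 v3
      have := hI e1 f1 v1 v2 v3 f1 f2 f3
      rw [p11, p12, p13] at this
      have e1' : M v1 e1 v3 f1 f2 f3 = - M e1 v1 v3 f1 f2 f3 := by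
        rw [k13 v1, k23 v3, k13 v3]; ring
      have e2' : M v1 v2 e1 f1 f2 f3 = M e1 v1 v2 f1 f2 f3 := by
        rw [k13 v1, k23 e1]; ring
      rw [e1', e2'] at this
      linear_combination this
    have q2 : ∀ x y, M e1 x y f1 f2 f3 = f2 x * M e1 e2 y f1 f2 f3
        - f2 y * M e1 e2 x f1 f2 f3 := by
      intro x y
      have := hI e2 f2 e1 x y f1 f2 f3
      rw [p21, p22, p23, p12, k23 e1 x e2] at this
      linear_combination this
    have q3 : ∀ x, M e1 e2 x f1 f2 f3 = f3 x * M e1 e2 e3 f1 f2 f3 := by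
      intro x
      have := hI e3 f3 e1 e2 x f1 f2 f3
      rw [p31, p32, p33, p13, p23] at this
      linear_combination this
    refine ⟨M e1 e2 e3 f1 f2 f3, fun v1 v2 v3 => ?_⟩
    rw [q1, q2 v2, q2 v1, q2 v1, q3 v1, q3 v2, q3 v3, dt]
    ring
  have hex2 : ∀ f3 f2, ∃ c : F, ∀ f1 v1 v2 v3,
      M v1 v2 v3 f1 f2 f3 = c * dt v1 v2 v3 f1 f2 f3 := by
    intro f3 f2
    obtain ⟨c, hc⟩ := L0 (F := F) (I := X × X × X)
      (fun (f1 : X →L[F] F) t => M t.1 t.2.1 t.2.2 f1 f2 f3)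
      (fun f1 t => dt t.1 t.2.1 t.2.2 f1 f2 f3) (by intros; apply a1) (by intros; apply s1)
      (by intros; simp [dt]; ring) (by intros; simp [dt]; ring)
      (by
        intro f1
        obtain ⟨c, hc⟩ := hex f3 f2 f1
        exact ⟨c, fun t => hc _ _ _⟩)
    exact ⟨c, fun f1 v1 v2 v3 => hc f1 (v1, v2, v3)⟩
  have hex3 : ∀ f3, ∃ c : F, ∀ f2 f1 v1 v2 v3,
      M v1 v2 v3 f1 f2 f3 = c * dt v1 v2 v3 f1 f2 f3 := by
    intro f3
    obtain ⟨c, hc⟩ := L0 (F := F) (I := (X →L[F] F) × X × X × X)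
      (fun (f2 : X →L[F] F) t => M t.2.1 t.2.2.1 t.2.2.2 t.1 f2 f3)
      (fun f2 t => dt t.2.1 t.2.2.1 t.2.2.2 t.1 f2 f3) (by intros; apply a2) (by intros; apply s2)
      (by intros; simp [dt]; ring) (by intros; simp [dt]; ring)
      (by
        intro f2
        obtain ⟨c, hc⟩ := hex2 f3 f2
        exact ⟨c, fun t => hc _ _ _ _⟩)
    exact ⟨c, fun f2 f1 v1 v2 v3 => hc f2 (f1, v1, v2, v3)⟩
  obtain ⟨c, hc⟩ := L0 (F := F) (I := (X →L[F] F) × (X →L[F] F) × X × X × X)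
      (fun (f3 : X →L[F] F) t => M t.2.2.1 t.2.2.2.1 t.2.2.2.2 t.1 t.2.1 f3)
      (fun f3 t => dt t.2.2.1 t.2.2.2.1 t.2.2.2.2 t.1 t.2.1 f3)
      (by intros; apply a3) (by intros; apply s3)
      (by intros; simp [dt]; ring) (by intros; simp [dt]; ring)
      (by
        intro f3
        obtain ⟨c, hc⟩ := hex3 f3
        exact ⟨c, fun t => hc _ _ _ _ _⟩)
  exact ⟨c, fun v1 v2 v3 f1 f2 f3 => hc f3 (f1, f2, v1, v2, v3)⟩

set_option maxHeartbeats 2000000 in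
lemma stepB (hX : Big F X) (S : (X →L[F] X) →ₗ[F] (X →L[F] X) →ₗ[F] (X →L[F] X))
    (hS : ∀ x y, S x y = S y x)
    (hT : ∀ x y w, (S x y * w - w * S x y) + (S y w * x - x * S y w)
      + (S w x * y - y * S w x) = 0) :
    ∃ (κ : F) (l : X →ₗ[F] (X →L[F] F) →ₗ[F] F), ∀ v1 f1 v2 f2, ∃ c : F,
      (2 : F) • S (rk v1 f1) (rk v2 f2) = κ • (rk v1 f1 * rk v2 f2 + rk v2 f2 * rk v1 f1)
        + l v1 f1 • rk v2 f2 + l v2 f2 • rk v1 f1 + c • 1 := by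
  have h2 : ∀ v f, ∃ l c : F, S (rk v f) (rk v f) = l • rk v f + c • 1 := by
    intro v f
    by_cases hf : f = 0
    · exact ⟨0, 0, by simp [hf]⟩
    apply lemR hX v f hf
    intro s k
    refine ⟨(2 : F) • S (rk v f) (rk s k), ?_⟩
    have := hT (rk v f) (rk v f) (rk s k)
    rw [hS (rk s k)] at this
    simp only [mul_smul_comm, smul_mul_assoc]
    linear_combination (norm := module) this
  obtain ⟨l, hl⟩ := lemLam hX S h2
  choose cl hl using hl
  let G : X → (X →L[F] F) → X →ₗ[F] (X →L[F] F) →ₗ[F] (X →L[F] X) := fun v2 f2 =>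
    LinearMap.mk₂ F (fun v f => (2 : F) • S (rk v f) (rk v2 f2) - l v f • rk v2 f2
      - l v2 f2 • rk v f)
      (by intros; simp only [map_add, LinearMap.add_apply]; module)
      (by intros; simp only [map_smul, LinearMap.smul_apply, smul_eq_mul]; module)
      (by intros; simp only [map_add, LinearMap.add_apply]; module)
      (by intros; simp only [map_smul, LinearMap.smul_apply, smul_eq_mul]; module)
  have hG : ∀ v2 f2 v f, G v2 f2 v f = (2 : F) • S (rk v f) (rk v2 f2) - l v f • rk v2 f2
      - l v2 f2 • rk v f := fun _ _ _ _ => rfl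
  have Gsym : ∀ v2 f2 v f, G v2 f2 v f = G v f v2 f2 := by
    intro v2 f2 v f
    rw [hG, hG, hS (rk v f)]; abel
  have Gcomm : ∀ v2 f2 v f, G v2 f2 v f * rk v f = rk v f * G v2 f2 v f := by
    intro v2 f2 v f
    rw [hG]
    have := hT (rk v f) (rk v f) (rk v2 f2)
    rw [hS (rk v2 f2), hl] at this
    simp only [mul_smul_comm, smul_mul_assoc, sub_mul, mul_sub, add_mul, mul_add, one_mul,
      mul_one] at this ⊢
    linear_combination (norm := module) this
  have hφ := fun v2 f2 => lemPhi (G v2 f2) (Gcomm v2 f2)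
  choose φ hφ using hφ
  have φsym : ∀ v1 f1 v2 f2, φ v2 f2 v1 f1 = φ v1 f1 v2 f2 := by
    have hz : ∀ v1 f1 v2 f2, v2 = 0 ∨ f2 = 0 → φ v2 f2 v1 f1 = 0 := by
      intro v1 f1 v2 f2 h0
      by_cases hv : v1 = 0
      · simp [hv]
      have h1 := (hφ v2 f2 v1 f1).1
      have h3 : G v2 f2 v1 f1 = 0 := by
        rw [Gsym]
        rcases h0 with h0 | h0 <;> simp [h0]
      rw [h3] at h1
      have h4 : φ v2 f2 v1 f1 • v1 = 0 := by rw [← h1]; simp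
      exact (smul_eq_zero.mp h4).resolve_right hv
    intro v1 f1 v2 f2
    by_cases hv1 : v1 = 0
    · rw [hz v2 f2 v1 f1 (Or.inl hv1), hv1]; simp
    by_cases hf1 : f1 = 0
    · rw [hz v2 f2 v1 f1 (Or.inr hf1), hf1]; simp
    have hadd : ∀ v w, φ (v + w) f2 v1 f1 = φ v f2 v1 f1 + φ w f2 v1 f1 := by
      intro v w
      apply smul_left_injective F hv1
      change _ • v1 = (_ + _) • v1
      rw [add_smul, ← (hφ _ _ _ _).1, ← (hφ _ _ _ _).1, ← (hφ _ _ _ _).1, Gsym, map_add,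
        Gsym v, Gsym w]
      simp
    have hne : ∀ v, f1 v ≠ 0 → φ v f2 v1 f1 = φ v1 f1 v f2 := by
      intro v hv
      have e1 := (hφ v f2 v1 f1).2 v
      have e2 := congrArg f1 (hφ v1 f1 v f2).1
      rw [Gsym, e2, map_smul, smul_eq_mul] at e1
      exact (mul_right_cancel₀ hv e1).symm
    by_cases h : f1 v2 = 0
    · obtain ⟨s, hs⟩ := exists_one hf1
      have e1 := hne s (by simp [hs])
      have e2 := hne (v2 + s) (by simp [hs, h])
      rw [hadd, map_add, LinearMap.add_apply, e1] at e2
      exact add_right_cancel e2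
    · exact hne v2 h
  let R : X → (X →L[F] F) → X → (X →L[F] F) → (X →L[F] X) := fun v1 f1 v2 f2 =>
    G v2 f2 v1 f1 - φ v2 f2 v1 f1 • 1
  have Rdef : ∀ v1 f1 v2 f2, R v1 f1 v2 f2 = G v2 f2 v1 f1 - φ v2 f2 v1 f1 • 1 :=
    fun _ _ _ _ => rfl
  have Rsym : ∀ v1 f1 v2 f2, R v1 f1 v2 f2 = R v2 f2 v1 f1 := by
    intro v1 f1 v2 f2
    rw [Rdef, Rdef, Gsym, φsym]
  have Rav : ∀ v w f1 v2 f2, R (v + w) f1 v2 f2 = R v f1 v2 f2 + R w f1 v2 f2 := by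
    intros; simp only [Rdef, map_add, LinearMap.add_apply]; module
  have Raf : ∀ v1 f g v2 f2, R v1 (f + g) v2 f2 = R v1 f v2 f2 + R v1 g v2 f2 := by
    intros; simp only [Rdef, map_add]; module
  have Rsf : ∀ v1 (c : F) f v2 f2, R v1 (c • f) v2 f2 = c • R v1 f v2 f2 := by
    intros; simp only [Rdef, map_smul, smul_eq_mul]; module
  have R1 : ∀ v1 f1 v2 f2, R v1 f1 v2 f2 v1 = 0 := by
    intro v1 f1 v2 f2
    rw [Rdef]; simp [(hφ v2 f2 v1 f1).1]
  have R2 : ∀ v1 f1 v2 f2, R v1 f1 v2 f2 v2 = 0 := by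
    intro v1 f1 v2 f2
    rw [Rsym, R1]
  have R3 : ∀ v1 (f1 : X →L[F] F) v2 f2 u, f1 (R v1 f1 v2 f2 u) = 0 := by
    intro v1 f1 v2 f2 u
    rw [Rdef]; simp [(hφ v2 f2 v1 f1).2]
  have R4 : ∀ v1 f1 v2 (f2 : X →L[F] F) u, f2 (R v1 f1 v2 f2 u) = 0 := by
    intro v1 f1 v2 f2 u
    rw [Rsym, R3]
  have RI : ∀ v1 f1 v2 f2 v3 f3,
      (R v1 f1 v2 f2 * rk v3 f3 - rk v3 f3 * R v1 f1 v2 f2)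
      + (R v2 f2 v3 f3 * rk v1 f1 - rk v1 f1 * R v2 f2 v3 f3)
      + (R v3 f3 v1 f1 * rk v2 f2 - rk v2 f2 * R v3 f3 v1 f1) = 0 := by
    intro v1 f1 v2 f2 v3 f3
    have := hT (rk v1 f1) (rk v2 f2) (rk v3 f3)
    simp only [Rdef, hG, mul_smul_comm, smul_mul_assoc, sub_mul, mul_sub, one_mul, mul_one]
    linear_combination (norm := module) (2 : F) • this
  have k13 : ∀ v1 v2 v3 f1 f2 (f3 : X →L[F] F),
      f3 (R v1 f1 v2 f2 v3) = - f3 (R v3 f1 v2 f2 v1) := by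
    intro v1 v2 v3 f1 f2 f3
    have := congrArg f3 (R1 (v1 + v3) f1 v2 f2)
    simp only [Rav, map_add, add_apply, R1, map_zero] at this
    linear_combination this
  have k23 : ∀ v1 v2 v3 f1 f2 (f3 : X →L[F] F),
      f3 (R v1 f1 v2 f2 v3) = - f3 (R v1 f1 v3 f2 v2) := by
    intro v1 v2 v3 f1 f2 f3
    rw [Rsym, k13, Rsym]
  have j23 : ∀ v1 v2 v3 f1 (f2 f3 : X →L[F] F),
      f3 (R v1 f1 v2 f2 v3) = - f2 (R v1 f1 v2 f3 v3) := by
    intro v1 v2 v3 f1 f2 f3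
    have := R3 v2 (f2 + f3) v1 f1 v3
    simp only [Raf, map_add, add_apply, R3] at this
    rw [Rsym v1, Rsym v1]
    linear_combination this
  have cyc : ∀ v1 v2 v3 (f1 f2 f3 : X →L[F] F),
      f1 (R v2 f2 v3 f3 v1) = f3 (R v1 f1 v2 f2 v3) := by
    intro v1 v2 v3 f1 f2 f3
    rw [k23, j23, Rsym v2, neg_neg]
  obtain ⟨κ, hκ⟩ := lemM (fun v1 v2 v3 f1 f2 f3 => f3 (R v1 f1 v2 f2 v3))
    (by intros; simp [Raf]) (by intros; simp [Rsf])
    (by intro v1 v2 v3 f f' f1 f3; simp [Rsym v1 f1, Raf])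
    (by intro v1 v2 v3 c f f1 f3; simp [Rsym v1 f1, Rsf])
    (by intros; simp) (by intros; simp) k13 k23
    (by
      intro v1 v2 v3 f g
      rw [j23, R3, neg_zero])
    (by intros; simp [R3]) (by intros; simp [R4])
    (by
      intro v0 f0 v1 v2 v3 f1 f2 f3
      have := congrArg f0 (congrArg (fun T : X →L[F] X => T v0) (RI v1 f1 v2 f2 v3 f3))
      simp at this
      rw [cyc v1 v2 v3, ← cyc v3 v1 v2, cyc v0 v2 v3 f1, ← cyc v3 v1 v0 f3] at this
      linear_combination this)
  refine ⟨κ, l - κ • LinearMap.mk₂ F (fun v (f : X →L[F] F) => f v) (by simp) (by simp) (by simp)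
    (by simp), fun v1 f1 v2 f2 =>
    ⟨φ v2 f2 v1 f1 + κ * (f1 v1 * f2 v2 - f1 v2 * f2 v1), ?_⟩⟩
  ext u
  apply hbsep (F := F)
  intro f3
  have := hκ v1 v2 u f1 f2 f3
  simp only [Rdef, hG, dt] at this
  simp at this ⊢
  linear_combination this

set_option maxHeartbeats 2000000 in
lemma stepC (hX : Big F X) (S : (X →L[F] X) →ₗ[F] (X →L[F] X) →ₗ[F] (X →L[F] X))
    (hS : ∀ x y, S x y = S y x)
    (hT : ∀ x y w, (S x y * w - w * S x y) + (S y w * x - x * S y w)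
      + (S w x * y - y * S w x) = 0) :
    ∃ (κ : F) (c : (X →L[F] X) →ₗ[F] F), ∀ x, ∃ s : F,
      S x x = κ • (x * x) + c x • x + s • 1 := by
  obtain ⟨κ, l, h⟩ := stepB hX S hS hT
  let B : (X →L[F] X) → X →ₗ[F] (X →L[F] F) →ₗ[F] (X →L[F] X) := fun x =>
    LinearMap.mk₂ F (fun v f => (2 : F) • S x (rk v f) - κ • (x * rk v f + rk v f * x)
      - l v f • x)
      (by intros; simp only [map_add, LinearMap.add_apply, mul_add, add_mul]; module)
      (by
        intros
        simp only [map_smul, LinearMap.smul_apply, smul_eq_mul, mul_smul_comm, smul_mul_assoc]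
        module)
      (by intros; simp only [map_add, mul_add, add_mul]; module)
      (by intros; simp only [map_smul, smul_eq_mul, mul_smul_comm, smul_mul_assoc]; module)
  have hB : ∀ x v f, B x v f = (2 : F) • S x (rk v f) - κ • (x * rk v f + rk v f * x)
      - l v f • x := fun _ _ _ => rfl
  have hBc : ∀ x v1 f1 v2 f2, B x v1 f1 * rk v2 f2 - rk v2 f2 * B x v1 f1
      = rk v1 f1 * B x v2 f2 - B x v2 f2 * rk v1 f1 := by
    intro x v1 f1 v2 f2
    obtain ⟨s, hs⟩ := h v1 f1 v2 f2
    have h1 := hT x (rk v1 f1) (rk v2 f2)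
    rw [hS (rk v2 f2) x] at h1
    have h2 := congrArg (fun y => y * x - x * y) hs
    simp only [hB, mul_smul_comm, smul_mul_assoc, sub_mul, mul_sub, one_mul, mul_one, add_mul,
      mul_add, smul_add, mul_assoc] at h1 h2 ⊢
    linear_combination (norm := module) (2 : F) • h1 - h2
  have hBR : ∀ x v f, ∃ m s : F, B x v f = m • rk v f + s • 1 := by
    intro x v f
    by_cases hf : f = 0
    · exact ⟨0, 0, by simp [hf]⟩
    apply lemR hX v f hf
    intro s k
    exact ⟨_, hBc x v f s k⟩
  have hc : ∀ x, ∃ c : F, ∀ v f (g : X →L[F] F) u, g u = 0 → g (B x v f u) = c * (g v * f u) := by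
    intro x
    have h1 : ∀ f, ∃ c : F, ∀ (v : X) (t : {t : (X →L[F] F) × X // t.1 t.2 = 0}),
        t.1.1 (B x v f t.1.2) = c * (t.1.1 v * f t.1.2) := by
      intro f
      apply L0 (F := F) (fun (v : X) (t : {t : (X →L[F] F) × X // t.1 t.2 = 0}) =>
        t.1.1 (B x v f t.1.2)) (fun v t => t.1.1 v * f t.1.2)
      · intros; simp
      · intros; simp
      · intros; simp; ring
      · intros; simp; ring
      · intro v
        obtain ⟨m, s, hm⟩ := hBR x v f
        refine ⟨m, fun t => ?_⟩
        have := t.2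
        simp only [hm]
        simp [this]
        exact Or.inl (mul_comm _ _)
    obtain ⟨c, hc⟩ := L0 (F := F) (fun (f : X →L[F] F)
        (t : X × {t : (X →L[F] F) × X // t.1 t.2 = 0}) =>
        t.2.1.1 (B x t.1 f t.2.1.2)) (fun f t => t.2.1.1 t.1 * f t.2.1.2)
        (by intros; simp) (by intros; simp) (by intros; simp; ring) (by intros; simp; ring)
        (by
          intro f
          obtain ⟨c, hc⟩ := h1 f
          exact ⟨c, fun t => hc t.1 t.2⟩)
    exact ⟨c, fun v f g u hg => hc f (v, ⟨(g, u), hg⟩)⟩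
  choose c hc using hc
  obtain ⟨u0, v0, hu0, hv0⟩ := id hX
  obtain ⟨g0, hg0, hg1⟩ := hb2 hv0
  obtain ⟨f0, hf0⟩ := hb1 (F := F) hu0
  have hcx : ∀ x, c x = g0 (B x v0 f0 u0) := by
    intro x
    rw [hc x v0 f0 g0 u0 hg0, hg1, hf0]; simp
  refine ⟨κ, { toFun := c, map_add' := ?_, map_smul' := ?_ }, fun x => ?_⟩
  · intro x y
    simp only [hcx, hB]
    simp; ring
  · intro t x
    simp only [hcx, hB]
    simp; ring
  · have hsc : ∀ v f, ∃ s : F, B x v f - c x • rk v f = s • 1 := by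
      intro v f
      apply scalar_of
      intro g u hg
      have := hc x v f g u hg
      simp [this]; ring
    obtain ⟨s, hs⟩ := scalar_of_comm (S x x - κ • (x * x) - c x • x) (by
      intro v f
      obtain ⟨s, hs⟩ := hsc v f
      have h1 := hT x x (rk v f)
      rw [hS (rk v f) x] at h1
      have h2 := congrArg (fun y => y * x - x * y) hs
      simp only [hB, mul_smul_comm, smul_mul_assoc, sub_mul, mul_sub, one_mul, mul_one, add_mul,
        mul_add, smul_add, smul_sub, mul_assoc] at h1 h2 ⊢
      linear_combination (norm := module) h1 - h2)
    refine ⟨s, ?_⟩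
    rw [← hs]
    simp only [LinearMap.coe_mk, AddHom.coe_mk]
    abel

lemma smul_one_mem (c : F) : c • (1 : X →L[F] X) ∈ Subring.center (X →L[F] X) := by
  rw [Subring.mem_center_iff]
  intro g
  simp

lemma small_center (hX : ¬ Big F X) (x : X →L[F] X) : ∃ c : F, x = c • 1 := by
  apply scalar_of
  intro g u hg
  by_cases hu : u = 0
  · simp [hu]
  by_contra hne
  apply hX
  refine ⟨u, x u, hu, fun c hc => hne ?_⟩
  rw [hc]; simp [hg]
end aux

/-- **Corollary 3.21.**  Let `X` be a Banach space over the real or complex field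
`F` and let `B(X)` be the algebra of all bounded linear operators on `X`.  Then
every commuting trace of an arbitrary `F`-bilinear map on `B(X)` is proper. -/
theorem stmt11 (F X : Type*) [RCLike F] [NormedAddCommGroup X] [NormedSpace F X]
    [CompleteSpace X]
    (q : (X →L[F] X) →ₗ[F] (X →L[F] X) →ₗ[F] (X →L[F] X))
    (hcomm : ∀ x : X →L[F] X, q x x * x = x * q x x) :
    ∃ z ∈ Subring.center (X →L[F] X),
      ∃ μ : (X →L[F] X) →ₗ[F] (X →L[F] X),
        (∀ x, μ x ∈ Subring.center (X →L[F] X)) ∧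
        ∃ p : (X →L[F] X) →ₗ[F] (X →L[F] X) →ₗ[F] (X →L[F] X),
          (∀ x y, p x y ∈ Subring.center (X →L[F] X)) ∧
          ∀ x : X →L[F] X, q x x = z * x ^ 2 + μ x * x + p x x := by
  by_cases hX : Big F X
  swap
  · refine ⟨0, Subring.zero_mem _, 0, fun x => Subring.zero_mem _, q, fun x y => ?_, fun x => ?_⟩
    · obtain ⟨c, hc⟩ := small_center hX (q x y)
      rw [hc]; exact smul_one_mem c
    · simp
  have hS : ∀ x y, (q + q.flip) x y = (q + q.flip) y x := by
    intro x y
    simp [add_comm]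
  have hC : ∀ x, q x x * x - x * q x x = 0 := fun x => sub_eq_zero.mpr (hcomm x)
  obtain ⟨κ, c, h⟩ := stepC hX (q + q.flip) hS (by
    intro x y w
    have h1 := hC (x + y + w)
    have h2 := hC (x + y)
    have h3 := hC (y + w)
    have h4 := hC (x + w)
    have h5 := hC x
    have h6 := hC y
    have h7 := hC w
    simp only [map_add, LinearMap.add_apply, LinearMap.flip_apply, mul_add, add_mul]
      at h1 h2 h3 h4 h5 h6 h7 ⊢
    linear_combination (norm := module) h1 - h2 - h3 - h4 + h5 + h6 + h7)
  let p : (X →L[F] X) →ₗ[F] (X →L[F] X) →ₗ[F] (X →L[F] X) :=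
    LinearMap.mk₂ F (fun x y => (1/2 : F) • (q x y + q y x) - (κ / 4) • (x * y + y * x)
      - (c x / 4) • y - (c y / 4) • x)
      (by intros; simp only [map_add, LinearMap.add_apply, mul_add, add_mul]; module)
      (by
        intros
        simp only [map_smul, LinearMap.smul_apply, smul_eq_mul, mul_smul_comm, smul_mul_assoc]
        module)
      (by intros; simp only [map_add, LinearMap.add_apply, mul_add, add_mul]; module)
      (by
        intros
        simp only [map_smul, LinearMap.smul_apply, smul_eq_mul, mul_smul_comm, smul_mul_assoc]
        module)
  have hp : ∀ x y, p x y = (1/2 : F) • (q x y + q y x) - (κ / 4) • (x * y + y * x)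
      - (c x / 4) • y - (c y / 4) • x := fun _ _ => rfl
  have hps : ∀ x y, p x y = p y x := by
    intro x y
    rw [hp, hp]; module
  have hpx : ∀ x, ∃ s : F, p x x = s • 1 := by
    intro x
    obtain ⟨s, hs⟩ := h x
    refine ⟨s / 2, ?_⟩
    simp only [LinearMap.add_apply, LinearMap.flip_apply] at hs
    rw [hp]
    linear_combination (norm := module) (1/2 : F) • hs
  refine ⟨(κ / 2) • 1, smul_one_mem _, ((1/2 : F) • c).smulRight 1, fun x => smul_one_mem _, p,
    fun x y => ?_, fun x => ?_⟩
  · obtain ⟨s1, h1⟩ := hpx x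
    obtain ⟨s2, h2⟩ := hpx y
    obtain ⟨s3, h3⟩ := hpx (x + y)
    have : p x y = ((s3 - s1 - s2) / 2) • 1 := by
      simp only [map_add, LinearMap.add_apply, h1, h2, hps y x] at h3
      linear_combination (norm := module) (1/2 : F) • h3
    rw [this]; exact smul_one_mem _
  · rw [hp]
    simp only [LinearMap.smulRight_apply, LinearMap.smul_apply, smul_eq_mul, smul_mul_assoc,
      one_mul, pow_two]
    module
end
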